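/- arXiv:1909.02922 — 2 statements merged into one kernel-verified Lean document; each statement's English description precedes it below -/
import Mathlib

section
/- Let κ > 1 and let (T_n) be a sequence of subsets of ℝ such that each T_n is κ-thick, i.e. for every r > 0 one has T_n ∩ ([−κr, −r] ∪ [r, κr]) ≠ ∅. Then the sequence (T_n) has accumulating renormalizations. -/
open Filter

/-- The topological `limsup` of a sequence of subsets of a topological space:
the set of points `x` such that every neighborhood of `x` meets `Q n` for
infinitely many `n`. -/
def seqLimsup {α : Type*} [TopologicalSpace α] (Q : ℕ → Set α) : Set α :=
  {x | ∀ O ∈ nhds x, {n | (O ∩ Q n).Nonempty}.Infinite}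

/-- A sequence `T : ℕ → Set ℝ` has accumulating renormalizations if for every
sequence `λ_n → +∞` of positive reals, the set `T_∞ = limsup_n λ_n⁻¹ T_n`
contains a sequence of nonzero elements tending to `0`, as well as a sequence
whose absolute values tend to `+∞`. -/
def HasAccumulatingRenormalizations (T : ℕ → Set ℝ) : Prop :=
  ∀ lam : ℕ → ℝ, (∀ n, 0 < lam n) → Tendsto lam atTop atTop →
    (∃ s : ℕ → ℝ,
      (∀ k, s k ∈ seqLimsup (fun n => (fun t => (lam n)⁻¹ * t) '' T n) ∧ s k ≠ 0) ∧
      Tendsto s atTop (nhds 0)) ∧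
    (∃ s : ℕ → ℝ,
      (∀ k, s k ∈ seqLimsup (fun n => (fun t => (lam n)⁻¹ * t) '' T n)) ∧
      Tendsto (fun k => |s k|) atTop atTop)

/-- A set `T ⊆ ℝ` is `κ`-thick if for every `r > 0` it meets
`[-κr, -r] ∪ [r, κr]`. -/
def IsKappaThick (κ : ℝ) (T : Set ℝ) : Prop :=
  ∀ r : ℝ, 0 < r → (T ∩ (Set.Icc (-(κ * r)) (-r) ∪ Set.Icc r (κ * r))).Nonempty

/-!
Thickness is invariant under scaling, and by compactness of `[-κr, -r] ∪ [r, κr]` it passes to the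
limsup of a sequence of sets. So `T_∞` is itself `κ`-thick, hence has points of absolute value
comparable to any prescribed `r > 0`; let `r` tend to `0` and to `+∞`.
-/

theorem inter_seqLimsup_nonempty_of_isCompact {α : Type*} [TopologicalSpace α] {K : Set α}
    (hK : IsCompact K) {Q : ℕ → Set α} (hQ : ∃ᶠ n in atTop, (K ∩ Q n).Nonempty) :
    (K ∩ seqLimsup Q).Nonempty := by
  by_contra hempty
  have hlocal : ∀ x ∈ K, ∃ O ∈ nhds x, {n | (O ∩ Q n).Nonempty}.Finite := by
    intro x hxK
    by_contra! hinfinite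
    exact hempty ⟨x, hxK, hinfinite⟩
  have hfinite : {n | (K ∩ Q n).Nonempty}.Finite := by
    refine hK.induction_on (p := fun s => {n | (s ∩ Q n).Nonempty}.Finite) ?_ ?_ ?_ ?_
    · simp only [Set.empty_inter, Set.not_nonempty_empty, Set.ofPred_false, Set.finite_empty]
    · exact fun s t hst ht => ht.subset fun n hn => hn.mono (Set.inter_subset_inter_left _ hst)
    · intro s t hs ht
      simpa only [Set.union_inter_distrib_right, Set.union_nonempty, Set.ofPred_or]
        using hs.union ht
    · intro x hxK
      obtain ⟨O, hO, hOfinite⟩ := hlocal x hxK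
      exact ⟨O, mem_nhdsWithin_of_mem_nhds hO, hOfinite⟩
  exact Nat.frequently_atTop_iff_infinite.mp hQ hfinite

theorem mem_Icc_neg_union_Icc_iff_abs_mem_Icc {G : Type*} [AddCommGroup G] [LinearOrder G]
    [IsOrderedAddMonoid G] {a b x : G} (ha : 0 ≤ a) :
    x ∈ Set.Icc (-b) (-a) ∪ Set.Icc a b ↔ |x| ∈ Set.Icc a b := by
  simp only [Set.mem_union, Set.mem_Icc, le_abs, abs_le]
  grind

theorem isKappaThick_iff_exists_abs_mem_Icc {κ : ℝ} {T : Set ℝ} :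
    IsKappaThick κ T ↔ ∀ r, 0 < r → ∃ t ∈ T, |t| ∈ Set.Icc r (κ * r) :=
  forall₂_congr fun _ hr => exists_congr fun _ =>
    and_congr_right fun _ => mem_Icc_neg_union_Icc_iff_abs_mem_Icc hr.le

theorem isKappaThick_seqLimsup {κ : ℝ} {Q : ℕ → Set ℝ}
    (hQ : ∃ᶠ n in atTop, IsKappaThick κ (Q n)) : IsKappaThick κ (seqLimsup Q) := by
  intro r hr
  rw [Set.inter_comm]
  refine inter_seqLimsup_nonempty_of_isCompact (isCompact_Icc.union isCompact_Icc) ?_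
  refine hQ.mono fun n hn => ?_
  rw [Set.inter_comm]
  exact hn r hr

namespace IsKappaThick

variable {κ : ℝ} {T : Set ℝ}

theorem image_const_mul (hT : IsKappaThick κ T) {c : ℝ} (hc : c ≠ 0) :
    IsKappaThick κ ((fun t => c * t) '' T) := by
  rw [isKappaThick_iff_exists_abs_mem_Icc] at hT ⊢
  intro r hr
  have habs : 0 < |c| := abs_pos.mpr hc
  obtain ⟨t, htT, hrt, htκ⟩ := hT (r / |c|) (div_pos hr habs)
  refine ⟨c * t, Set.mem_image_of_mem _ htT, ?_⟩
  rw [abs_mul]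
  exact ⟨(div_le_iff₀' habs).mp hrt, (le_div_iff₀' habs).mp (by rwa [mul_div_assoc])⟩

theorem exists_seq_tendsto_zero (hT : IsKappaThick κ T) :
    ∃ s : ℕ → ℝ, (∀ k, s k ∈ T ∧ s k ≠ 0) ∧ Tendsto s atTop (nhds 0) := by
  obtain ⟨r, -, hr, hr_zero⟩ := exists_seq_strictAnti_tendsto (0 : ℝ)
  choose s hsT hrs hsκ using fun k => isKappaThick_iff_exists_abs_mem_Icc.mp hT (r k) (hr k)
  refine ⟨s, fun k => ⟨hsT k, abs_pos.mp ((hr k).trans_le (hrs k))⟩, ?_⟩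
  exact squeeze_zero_norm hsκ (by simpa only [mul_zero] using hr_zero.const_mul κ)

theorem exists_seq_tendsto_abs_atTop (hT : IsKappaThick κ T) :
    ∃ s : ℕ → ℝ, (∀ k, s k ∈ T) ∧ Tendsto (fun k => |s k|) atTop atTop := by
  choose s hsT hks _ using fun k : ℕ =>
    isKappaThick_iff_exists_abs_mem_Icc.mp hT (k + 1) k.cast_add_one_pos
  refine ⟨s, hsT, tendsto_atTop_mono (fun k => ?_) tendsto_natCast_atTop_atTop⟩
  exact (lt_add_one (k : ℝ)).le.trans (hks k)

end IsKappaThick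

theorem thick_implies_accumulating_renormalizations_general {κ : ℝ} {T : ℕ → Set ℝ}
    (hT : ∃ᶠ n in atTop, IsKappaThick κ (T n)) : HasAccumulatingRenormalizations T := by
  intro lam hlam _
  have hlimsup : IsKappaThick κ (seqLimsup fun n => (fun t => (lam n)⁻¹ * t) '' T n) :=
    isKappaThick_seqLimsup (hT.mono fun n hn => hn.image_const_mul (inv_ne_zero (hlam n).ne'))
  exact ⟨hlimsup.exists_seq_tendsto_zero, hlimsup.exists_seq_tendsto_abs_atTop⟩

/-- If `κ > 1` and each `T n` is `κ`-thick, then the sequence `(T n)` has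
accumulating renormalizations. -/
theorem thick_implies_accumulating_renormalizations
    (κ : ℝ) (hκ : 1 < κ) (T : ℕ → Set ℝ) (hT : ∀ n, IsKappaThick κ (T n)) :
    HasAccumulatingRenormalizations T :=
  thick_implies_accumulating_renormalizations_general (Frequently.of_forall hT)
end

section
/- Let Γ be a discrete subgroup of G = PSL(2,ℂ) such that Γ\G is compact (a uniform lattice). Then for every x ∈ Γ\G, the orbit xH of the subgroup H = π(SL(2,ℝ)) is either closed in Γ\G or dense in Γ\G. -/
open scoped MatrixGroups
open Matrix Filter

noncomputable section

/-- `SL(2,ℂ)`. -/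
abbrev SL2C := Matrix.SpecialLinearGroup (Fin 2) ℂ

instance : TopologicalSpace SL2C := instTopologicalSpaceSubtype

/-- `G = PSL(2,ℂ) = SL(2,ℂ)/{±I}`, with the quotient topology. -/
abbrev PSL2C := Matrix.ProjectiveSpecialLinearGroup (Fin 2) ℂ

/-- The projection `π : SL(2,ℂ) → PSL(2,ℂ)`. -/
def pr : SL2C →* PSL2C := QuotientGroup.mk' _

/-- The upper triangular unipotent matrix `[[1, t],[0, 1]]` as an element of `SL(2,ℂ)`. -/
def uMat (t : ℂ) : SL2C := ⟨!![1, t; 0, 1], by simp [Matrix.det_fin_two_of]⟩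

/-- `u_t = π [[1, t],[0, 1]]` for `t ∈ ℝ`. -/
def uu (t : ℝ) : PSL2C := pr (uMat t)

/-- `v_s = π [[1, is],[0, 1]]` for `s ∈ ℝ`. -/
def vv (s : ℝ) : PSL2C := pr (uMat (s * Complex.I))

/-- The subgroup `U = {u_t : t ∈ ℝ}` as a subset of `PSL(2,ℂ)`. -/
def Uset : Set PSL2C := Set.range uu

/-- The subgroup `V = {v_s : s ∈ ℝ}` as a subset of `PSL(2,ℂ)`. -/
def Vset : Set PSL2C := Set.range vv

/-- The subgroup `N = {π [[1, z],[0,1]] : z ∈ ℂ}` as a subset of `PSL(2,ℂ)`. -/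
def Nset : Set PSL2C := {x | ∃ z : ℂ, x = pr (uMat z)}

/-- `H = π (SL(2,ℝ))`, the image in `PSL(2,ℂ)` of the real matrices. -/
def Hset : Set PSL2C :=
  {x | ∃ g : Matrix.SpecialLinearGroup (Fin 2) ℝ,
    x = pr (Matrix.SpecialLinearGroup.map (algebraMap ℝ ℂ) g)}

/-- The upper triangular matrix `[[a, z],[0, a⁻¹]]` as an element of `SL(2,ℂ)`,
for a nonzero real `a`. -/
def tri (a : ℝ) (ha : a ≠ 0) (z : ℂ) : SL2C :=
  ⟨!![(a : ℂ), z; 0, (a : ℂ)⁻¹], by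
    have h : (a : ℂ) ≠ 0 := by exact_mod_cast ha
    simp [Matrix.det_fin_two_of, mul_inv_cancel₀ h]⟩

/-- `AN = {π [[a, z],[0, a⁻¹]] : a > 0 real, z ∈ ℂ}`. -/
def ANset : Set PSL2C := {x | ∃ (a : ℝ) (ha : 0 < a) (z : ℂ), x = pr (tri a ha.ne' z)}

/-- `AV = {π [[a, ib],[0, a⁻¹]] : a > 0 real, b ∈ ℝ}`. -/
def AVset : Set PSL2C :=
  {x | ∃ (a : ℝ) (ha : 0 < a) (b : ℝ), x = pr (tri a ha.ne' (b * Complex.I))}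

/-- `A = {π diag(a, a⁻¹) : a > 0 real}`. -/
def Aset : Set PSL2C := {x | ∃ (a : ℝ) (ha : 0 < a), x = pr (tri a ha.ne' 0)}

variable (Γ : Subgroup PSL2C)

/-- The space `Γ\\G` of right cosets `Γg`, with the quotient topology. -/
abbrev XΓ := Quotient (QuotientGroup.rightRel Γ)

/-- The natural projection `G → Γ\\G`. -/
def mkX (g : PSL2C) : XΓ Γ := Quotient.mk'' g

/-- The right translation action of `G` on `Γ\\G`: `(Γg₀)·g = Γ(g₀g)`. -/
def act (x : XΓ Γ) (g : PSL2C) : XΓ Γ :=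
  Quotient.map' (fun h => h * g)
    (fun a b hab => by
      rw [QuotientGroup.rightRel_apply] at hab ⊢
      simpa [_root_.mul_inv_rev, mul_assoc] using hab) x

/-- The orbit `xS = {x·s : s ∈ S}` of a point `x ∈ Γ\\G` under a subset `S ⊆ G`. -/
def orb (x : XΓ Γ) (S : Set PSL2C) : Set (XΓ Γ) := (fun s => act Γ x s) '' S

/-- `Γ` is a lattice in `G`: there is a nonzero finite Borel measure on `Γ\\G`
invariant under the right translation action of `G`. -/
def IsLattice : Prop :=
  letI : MeasurableSpace (XΓ Γ) := borel _
  ∃ μ : MeasureTheory.Measure (XΓ Γ), μ ≠ 0 ∧ MeasureTheory.IsFiniteMeasure μ ∧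
    ∀ g : PSL2C, MeasureTheory.Measure.map (fun x => act Γ x g) μ = μ

/-!
Lift to `SL(2,ℂ)`, with `Λ` the preimage of `Γ`, and let `X` be the closure of `ΛaH`. If `ΛaH` is
not closed, there is a minimal `U`-invariant set `Y ⊆ X` for which the closed set
`Y⁻¹X = {g | Yg meets X}` accumulates at `1` outside `H`. Near `1` every element is, modulo `H`, of
the form `a + iQ` with `Q` real and traceless. Conjugating such elements by suitable `u_t` and
passing to the limit, polynomial divergence puts all `v_s` of one sign into `Y⁻¹X`, unless `Y⁻¹X`
lies in `VH` near `1`. In the latter case recurrence of `U` on `Y` produces elements of `Y⁻¹Y` that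
are close to `1` and normalize `U` without lying in it; by minimality of `Y` they act on
`{s | v_s ∈ Y⁻¹X}` by nontrivial affine maps close to the identity, and this forces a half-line into
that set as well. Translating along the half-line and using compactness, `X` contains a coset `zV`,
hence a coset of `AN ⊆ VH`. Every `AN`-orbit on a compact quotient is dense, so `X` is everything.
-/

open scoped Topology Pointwise

/-! ### Invariant sets in cocompact quotients -/

section CocompactSubgroup

variable {G : Type*} [Group G] {Y Z : Set G}

theorem mem_inv_mul_iff {g : G} : g ∈ Y⁻¹ * Z ↔ ∃ y ∈ Y, y * g ∈ Z := by
  constructor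
  · rintro ⟨y, hy, z, hz, rfl⟩
    exact ⟨y⁻¹, hy, by simpa using hz⟩
  · rintro ⟨y, hy, hyg⟩
    exact ⟨y⁻¹, by simpa using hy, y * g, hyg, by group⟩

theorem inv_mem_inv_mul_iff {g : G} : g⁻¹ ∈ Y⁻¹ * Z ↔ g ∈ Z⁻¹ * Y := by
  rw [← Set.mem_inv, _root_.mul_inv_rev, inv_inv]

theorem mul_mul_mem_doubleCoset_iff {Λ H : Subgroup G} {a g γ h : G} (hγ : γ ∈ Λ) (hh : h ∈ H) :
    γ * g * h ∈ DoubleCoset.doubleCoset a (Λ : Set G) H ↔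
      g ∈ DoubleCoset.doubleCoset a (Λ : Set G) H := by
  simp only [DoubleCoset.mem_doubleCoset, SetLike.mem_coe]
  constructor
  · rintro ⟨δ, hδ, k, hk, e⟩
    refine ⟨γ⁻¹ * δ, mul_mem (inv_mem hγ) hδ, k * h⁻¹, mul_mem hk (inv_mem hh), ?_⟩
    calc g = γ⁻¹ * (γ * g * h) * h⁻¹ := by group
      _ = γ⁻¹ * δ * a * (k * h⁻¹) := by rw [e]; group
  · rintro ⟨δ, hδ, k, hk, rfl⟩
    exact ⟨γ * δ, mul_mem hγ hδ, k * h, mul_mem hk hh, by group⟩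

variable [TopologicalSpace G] {Λ L H : Subgroup G}

/-- Cocompactness of `Λ`, in the form that some compact set meets every coset `Λ g`; for open
quotients of locally compact groups this is compactness of `Λ \ G`. -/
def IsCocompact (Λ : Subgroup G) : Prop :=
  ∃ K : Set G, IsCompact K ∧ ∀ g, ∃ γ ∈ Λ, γ * g ∈ K

/-- Discreteness of the image of `Λ` modulo the center of `G`: this is what a lattice of `G`
modulo its center pulls back to. -/
def IsDiscreteModCenter (Λ : Subgroup G) : Prop :=
  ∀ᶠ g in 𝓝 (1 : G), g ∈ Λ → g ∈ Subgroup.center G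

/-- Closed sets `Y` with `Λ Y L ⊆ Y`: the lifts to `G` of closed `L`-invariant sets in `Λ \ G`. -/
structure IsClosedInvariant (Λ L : Subgroup G) (Y : Set G) : Prop where
  isClosed : IsClosed Y
  mul_mem_left : ∀ γ ∈ Λ, ∀ y ∈ Y, γ * y ∈ Y
  mul_mem_right : ∀ y ∈ Y, ∀ l ∈ L, y * l ∈ Y

/-- Lifts to `G` of the minimal sets of the action of `L` on `Λ \ G`. -/
def IsMinimalInvariant (Λ L : Subgroup G) (Y : Set G) : Prop :=
  Minimal (fun Z => IsClosedInvariant Λ L Z ∧ Z.Nonempty) Y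

theorem IsClosedInvariant.mono_right (hY : IsClosedInvariant Λ H Y) (hL : L ≤ H) :
    IsClosedInvariant Λ L Y :=
  ⟨hY.isClosed, hY.mul_mem_left, fun y hy l hl => hY.mul_mem_right y hy l (hL hl)⟩

theorem IsClosedInvariant.inter (hY : IsClosedInvariant Λ L Y) (hZ : IsClosedInvariant Λ L Z) :
    IsClosedInvariant Λ L (Y ∩ Z) where
  isClosed := hY.isClosed.inter hZ.isClosed
  mul_mem_left γ hγ y hy := ⟨hY.mul_mem_left γ hγ y hy.1, hZ.mul_mem_left γ hγ y hy.2⟩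
  mul_mem_right y hy l hl := ⟨hY.mul_mem_right y hy.1 l hl, hZ.mul_mem_right y hy.2 l hl⟩

theorem IsClosedInvariant.sInter {c : Set (Set G)} (hc : ∀ Z ∈ c, IsClosedInvariant Λ L Z) :
    IsClosedInvariant Λ L (⋂₀ c) where
  isClosed := isClosed_sInter fun Z hZ => (hc Z hZ).isClosed
  mul_mem_left γ hγ y hy Z hZ := (hc Z hZ).mul_mem_left γ hγ y (hy Z hZ)
  mul_mem_right y hy l hl Z hZ := (hc Z hZ).mul_mem_right y (hy Z hZ) l hl

theorem IsMinimalInvariant.isClosedInvariant (hY : IsMinimalInvariant Λ L Y) :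
    IsClosedInvariant Λ L Y := hY.prop.1

theorem IsMinimalInvariant.nonempty (hY : IsMinimalInvariant Λ L Y) : Y.Nonempty := hY.prop.2

theorem IsMinimalInvariant.subset_of_inter_nonempty (hY : IsMinimalInvariant Λ L Y)
    (hZ : IsClosedInvariant Λ L Z) (h : (Y ∩ Z).Nonempty) : Y ⊆ Z :=
  (hY.le_of_le ⟨hY.isClosedInvariant.inter hZ, h⟩ Set.inter_subset_left).trans
    Set.inter_subset_right

theorem isCocompact_of_isOpenQuotientMap [WeaklyLocallyCompactSpace G] {X : Type*}
    [TopologicalSpace X] [CompactSpace X] {q : G → X} (hq : IsOpenQuotientMap q)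
    (hqΛ : ∀ g k, q g = q k → ∃ γ ∈ Λ, γ * g = k) : IsCocompact Λ := by
  choose K hK hgK using exists_compact_mem_nhds (X := G)
  choose lift hlift using hq.surjective
  obtain ⟨t, ht⟩ := finite_cover_nhds (U := fun x => q '' K (lift x)) fun x => by
    simpa [hlift] using hq.isOpenMap.image_mem_nhds (hgK (lift x))
  refine ⟨⋃ x ∈ t, K (lift x), t.isCompact_biUnion fun x _ => hK _, fun g => ?_⟩
  obtain ⟨x, hx, k, hk, hkg⟩ := Set.mem_iUnion₂.mp (ht ▸ Set.mem_univ (q g))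
  obtain ⟨γ, hγ, rfl⟩ := hqΛ g k hkg.symm
  exact ⟨γ, hγ, Set.mem_biUnion hx hk⟩

theorem IsCocompact.exists_mapClusterPt (hΛ : IsCocompact Λ) {ι : Type*} (l : Filter ι) [l.NeBot]
    (x : ι → G) : ∃ γ : ι → G, (∀ i, γ i ∈ Λ) ∧ ∃ z, MapClusterPt z l fun i => γ i * x i := by
  obtain ⟨K, hK, h⟩ := hΛ
  choose γ hγ hγK using fun i => h (x i)
  obtain ⟨z, -, hz⟩ := hK.exists_mapClusterPt (f := l) (u := fun i => γ i * x i)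
    (tendsto_principal.mpr (.of_forall hγK))
  exact ⟨γ, hγ, z, hz⟩

theorem IsClosedInvariant.exists_isMinimalInvariant_subset (hΛ : IsCocompact Λ)
    (hY : IsClosedInvariant Λ L Y) (hne : Y.Nonempty) :
    ∃ Z ⊆ Y, IsMinimalInvariant Λ L Z := by
  obtain ⟨K, hK, hKΛ⟩ := hΛ
  have inter_nonempty {Z : Set G} (hZ : IsClosedInvariant Λ L Z) (hZne : Z.Nonempty) :
      (K ∩ Z).Nonempty := by
    obtain ⟨z, hz⟩ := hZne
    obtain ⟨γ, hγ, hγz⟩ := hKΛ z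
    exact ⟨γ * z, hγz, hZ.mul_mem_left γ hγ z hz⟩
  refine zorn_superset_nonempty {Z | IsClosedInvariant Λ L Z ∧ Z.Nonempty} ?_ Y ⟨hY, hne⟩
  intro c hc hchain hcne
  refine ⟨⋂₀ c, ⟨.sInter fun Z hZ => (hc hZ).1, ?_⟩, fun Z hZ => Set.sInter_subset_of_mem hZ⟩
  by_contra hempty
  have : Nonempty c := hcne.to_subtype
  have directed : Directed (· ⊇ ·) (fun Z : c => (Z : Set G)) := fun Z W =>
    (hchain.total Z.2 W.2).elim (fun h => ⟨Z, subset_rfl, h⟩) (fun h => ⟨W, h, subset_rfl⟩)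
  obtain ⟨Z, hZ⟩ := hK.elim_directed_family_closed (fun Z : c => (Z : Set G))
    (fun Z => (hc Z.2).1.isClosed)
    (by rw [← Set.sInter_eq_iInter, Set.not_nonempty_iff_eq_empty.mp hempty, Set.inter_empty])
    directed
  exact (inter_nonempty (hc Z.2).1 (hc Z.2).2).ne_empty hZ

variable {S X : Set G}

theorem IsClosedInvariant.mul_mem_inv_mul (hY : IsClosedInvariant Λ L Y)
    (hZ : IsClosedInvariant Λ H Z) {g l h : G} (hl : l ∈ L) (hg : g ∈ Y⁻¹ * Z) (hh : h ∈ H) :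
    l * g * h ∈ Y⁻¹ * Z := by
  obtain ⟨y, hy, hyg⟩ := mem_inv_mul_iff.mp hg
  refine mem_inv_mul_iff.mpr ⟨y * l⁻¹, hY.mul_mem_right y hy _ (inv_mem hl), ?_⟩
  simpa [mul_assoc] using hZ.mul_mem_right _ hyg h hh

variable [IsTopologicalGroup G]

theorem IsClosedInvariant.isClosed_inv_mul (hΛ : IsCocompact Λ) (hY : IsClosedInvariant Λ L Y)
    (hZ : IsClosedInvariant Λ H Z) : IsClosed (Y⁻¹ * Z) := by
  obtain ⟨K, hK, hKΛ⟩ := hΛ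
  have restrict_to_compact : Y⁻¹ * Z = (K ∩ Y)⁻¹ * Z := by
    refine Set.Subset.antisymm (fun g hg => ?_)
      (Set.mul_subset_mul_right (Set.inv_subset_inv.mpr Set.inter_subset_right))
    obtain ⟨y, hy, hyg⟩ := mem_inv_mul_iff.mp hg
    obtain ⟨γ, hγ, hγy⟩ := hKΛ y
    refine mem_inv_mul_iff.mpr ⟨γ * y, ⟨hγy, hY.mul_mem_left γ hγ y hy⟩, ?_⟩
    simpa [mul_assoc] using hZ.mul_mem_left γ hγ _ hyg
  rw [restrict_to_compact]
  exact hZ.isClosed.mul_left_of_isCompact (hK.inter_right hY.isClosed).inv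

theorem IsClosedInvariant.preimage_mul_right (hZ : IsClosedInvariant Λ L Z) {g : G}
    (hg : g ∈ Subgroup.normalizer (L : Set G)) : IsClosedInvariant Λ L ((· * g) ⁻¹' Z) := by
  refine ⟨hZ.isClosed.preimage (continuous_mul_const g), fun γ hγ y hy => ?_, fun y hy l hl => ?_⟩
  · simpa [mul_assoc] using hZ.mul_mem_left γ hγ _ hy
  · simpa [mul_assoc] using
      hZ.mul_mem_right _ hy _ ((Subgroup.mem_set_normalizer_iff''.mp hg l).mp hl)

theorem IsMinimalInvariant.mul_mem_of_mem_normalizer (hY : IsMinimalInvariant Λ L Y)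
    (hZ : IsClosedInvariant Λ L Z) {g : G} (hg : g ∈ Y⁻¹ * Z)
    (hgL : g ∈ Subgroup.normalizer (L : Set G)) : ∀ y ∈ Y, y * g ∈ Z :=
  hY.subset_of_inter_nonempty (hZ.preimage_mul_right hgL) (mem_inv_mul_iff.mp hg)

theorem IsMinimalInvariant.mul_mem_inv_mul_iff (hY : IsMinimalInvariant Λ L Y) {g : G}
    (hg : g ∈ Y⁻¹ * Y) (hgL : g ∈ Subgroup.normalizer (L : Set G)) {x : G} :
    g * x ∈ Y⁻¹ * Z ↔ x ∈ Y⁻¹ * Z := by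
  have translate {k x : G} (hk : k ∈ Y⁻¹ * Y) (hkL : k ∈ Subgroup.normalizer (L : Set G))
      (hx : k * x ∈ Y⁻¹ * Z) : x ∈ Y⁻¹ * Z := by
    obtain ⟨y, hy, hyx⟩ := mem_inv_mul_iff.mp hx
    exact mem_inv_mul_iff.mpr ⟨y * k,
      hY.mul_mem_of_mem_normalizer hY.isClosedInvariant hk hkL y hy, by rwa [mul_assoc]⟩
  refine ⟨translate hg hgL, fun hx => ?_⟩
  exact translate (inv_mem_inv_mul_iff.mpr hg) (inv_mem hgL) (by rwa [inv_mul_cancel_left])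

theorem frequently_mul_mem_of_mem_closure {y : G} (hy : y ∈ closure S) :
    ∃ᶠ g in 𝓝 (1 : G), y * g ∈ S := by
  rw [mem_closure_iff_frequently, ← map_mul_left_nhds_one] at hy
  exact hy

theorem IsCocompact.exists_forall_mul_mem_of_eventually (hΛ : IsCocompact Λ)
    (hX : IsClosedInvariant Λ L X) {ι : Type*} {l : Filter ι} [l.NeBot] {x : ι → G}
    (h : ∀ s ∈ S, ∀ᶠ i in l, x i * s ∈ X) : ∃ z, ∀ s ∈ S, z * s ∈ X := by
  obtain ⟨γ, hγ, z, hz⟩ := hΛ.exists_mapClusterPt l x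
  refine ⟨z, fun s hs => ?_⟩
  have cluster : MapClusterPt (z * s) l fun i => γ i * x i * s :=
    hz.continuousAt_comp (f := (· * s)) (by fun_prop)
  refine hX.isClosed.mem_of_mapClusterPt cluster ((h s hs).mono fun i hi => ?_)
  rw [mul_assoc]
  exact hX.mul_mem_left _ (hγ i) _ hi

/-- Locally uniform membership replaces the closedness of `C` here. -/
theorem IsCocompact.exists_forall_mul_mem_of_eventually_prod (hΛ : IsCocompact Λ) {C : Set G}
    (hC : ∀ γ ∈ Λ, ∀ g ∈ C, γ * g ∈ C) {ι : Type*} {l : Filter ι} [l.NeBot] {x : ι → G}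
    (h : ∀ s ∈ S, ∀ᶠ p in l ×ˢ 𝓝 s, x p.1 * p.2 ∈ C) : ∃ z, ∀ s ∈ S, z * s ∈ C := by
  obtain ⟨γ, hγ, z, hz⟩ := hΛ.exists_mapClusterPt l x
  refine ⟨z, fun s hs => ?_⟩
  obtain ⟨P, hP, Q, hQ, hPQ⟩ := Filter.eventually_prod_iff.mp (h s hs)
  have absorbed : ∀ᶠ w in 𝓝 z, Q (w⁻¹ * (z * s)) := by
    have : Tendsto (fun w : G => w⁻¹ * (z * s)) (𝓝 z) (𝓝 (z⁻¹ * (z * s))) :=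
      Continuous.tendsto (by fun_prop) z
    rw [inv_mul_cancel_left] at this
    exact this.eventually hQ
  obtain ⟨i, hi, hPi⟩ := ((hz.frequently absorbed).and_eventually hP).exists
  have := hC _ (hγ i) _ (hPQ hPi hi)
  rwa [← mul_assoc, mul_inv_cancel_left] at this

theorem isClosedInvariant_closure (hS : ∀ γ ∈ Λ, ∀ y ∈ S, ∀ l ∈ L, γ * y * l ∈ S) :
    IsClosedInvariant Λ L (closure S) where
  isClosed := isClosed_closure
  mul_mem_left γ hγ y hy :=
    map_mem_closure (f := (γ * ·)) (by fun_prop) hy fun s hs => by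
      simpa using hS γ hγ s hs 1 (one_mem L)
  mul_mem_right y hy l hl :=
    map_mem_closure (f := (· * l)) (by fun_prop) hy fun s hs => by
      simpa using hS 1 (one_mem Λ) s hs l hl

theorem isClosedInvariant_closure_doubleCoset (a : G) :
    IsClosedInvariant Λ H (closure (DoubleCoset.doubleCoset a Λ H)) :=
  isClosedInvariant_closure fun _ hγ _ hy _ hh => (mul_mul_mem_doubleCoset_iff hγ hh).mpr hy

/-- Either the complement of `Λ a H` in its closure accumulates at every point of `Λ a H`, or it
is closed and contains a minimal set. -/
theorem exists_isMinimalInvariant_forall_mem_closure_diff (hΛ : IsCocompact Λ) (hL : L ≤ H) {a : G}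
    (ha : ¬ IsClosed (DoubleCoset.doubleCoset a (Λ : Set G) H)) :
    ∃ Y ⊆ closure (DoubleCoset.doubleCoset a (Λ : Set G) H), IsMinimalInvariant Λ L Y ∧
      ∀ y ∈ Y, y ∈ DoubleCoset.doubleCoset a (Λ : Set G) H →
        y ∈ closure (closure (DoubleCoset.doubleCoset a Λ H) \ DoubleCoset.doubleCoset a Λ H) := by
  set D := DoubleCoset.doubleCoset a (Λ : Set G) H
  have hX : IsClosedInvariant Λ H (closure D) := isClosedInvariant_closure_doubleCoset a
  have hR : IsClosedInvariant Λ H (closure (closure D \ D)) :=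
    isClosedInvariant_closure fun γ hγ y hy h hh =>
      ⟨hX.mul_mem_right _ (hX.mul_mem_left γ hγ y hy.1) h hh,
        fun hD => hy.2 ((mul_mul_mem_doubleCoset_iff hγ hh).mp hD)⟩
  by_cases hmeet : ∃ y ∈ D, y ∈ closure (closure D \ D)
  · obtain ⟨y, hyD, hyR⟩ := hmeet
    have D_subset : D ⊆ closure (closure D \ D) := fun x hx => by
      rw [← show _ = D from DoubleCoset.doubleCoset_eq_of_mem hyD] at hx
      obtain ⟨γ, hγ, h, hh, rfl⟩ := DoubleCoset.mem_doubleCoset.mp hx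
      exact hR.mul_mem_right _ (hR.mul_mem_left γ hγ y hyR) h hh
    obtain ⟨Y, hYX, hY⟩ := (hX.mono_right hL).exists_isMinimalInvariant_subset hΛ
      ⟨a, subset_closure (DoubleCoset.mem_doubleCoset_self Λ H a)⟩
    exact ⟨Y, hYX, hY, fun y _ hy => D_subset hy⟩
  · have R_nonempty : (closure D \ D).Nonempty := by
      by_contra hempty
      exact ha (closure_subset_iff_isClosed.mp
        (Set.sdiff_eq_empty.mp (Set.not_nonempty_iff_eq_empty.mp hempty)))
    obtain ⟨Y, hYR, hY⟩ := (hR.mono_right hL).exists_isMinimalInvariant_subset hΛ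
      R_nonempty.closure
    exact ⟨Y, hYR.trans (closure_minimal Set.sdiff_subset isClosed_closure), hY, fun y hy hyD =>
      absurd ⟨y, hyD, hYR hy⟩ hmeet⟩

theorem exists_isMinimalInvariant_frequently_notMem (hΛ : IsCocompact Λ) (hL : L ≤ H) {a : G}
    (ha : ¬ IsClosed (DoubleCoset.doubleCoset a (Λ : Set G) H)) :
    ∃ Y ⊆ closure (DoubleCoset.doubleCoset a (Λ : Set G) H), IsMinimalInvariant Λ L Y ∧
      ∃ᶠ g in 𝓝 1, g ∈ Y⁻¹ * closure (DoubleCoset.doubleCoset a Λ H) ∧ g ∉ H := by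
  obtain ⟨Y, hYX, hY, hYD⟩ := exists_isMinimalInvariant_forall_mem_closure_diff hΛ hL ha
  obtain ⟨y, hy⟩ := hY.nonempty
  have mul_mem_iff {h : G} (hh : h ∈ H) : y * h ∈ DoubleCoset.doubleCoset a (Λ : Set G) H ↔
      y ∈ DoubleCoset.doubleCoset a (Λ : Set G) H := by
    simpa using mul_mul_mem_doubleCoset_iff (one_mem Λ) hh
  refine ⟨Y, hYX, hY, ?_⟩
  by_cases hyD : y ∈ DoubleCoset.doubleCoset a (Λ : Set G) H
  · refine (frequently_mul_mem_of_mem_closure (hYD y hy hyD)).mono fun g hg => ?_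
    exact ⟨mem_inv_mul_iff.mpr ⟨y, hy, hg.1⟩, fun hgH => hg.2 ((mul_mem_iff hgH).mpr hyD)⟩
  · refine (frequently_mul_mem_of_mem_closure (hYX hy)).mono fun g hg => ?_
    exact ⟨mem_inv_mul_iff.mpr ⟨y, hy, subset_closure hg⟩, fun hgH => hyD ((mul_mem_iff hgH).mp hg)⟩

theorem IsCocompact.frequently_inv_mul_mul (hΛ : IsCocompact Λ) (x : ℕ → G) :
    ∃ᶠ g in 𝓝 (1 : G), ∃ m n, m < n ∧ ∃ γ ∈ Λ, g = (x m)⁻¹ * γ * x n := by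
  obtain ⟨γ, hγ, z, hz⟩ := hΛ.exists_mapClusterPt atTop x
  have quotient_tendsto : Tendsto (fun p : G × G => p.1⁻¹ * p.2) (𝓝 z ×ˢ 𝓝 z) (𝓝 1) := by
    rw [← nhds_prod_eq, ← inv_mul_cancel z]
    exact Continuous.tendsto (f := fun p : G × G => p.1⁻¹ * p.2) (by fun_prop) (z, z)
  refine frequently_iff.mpr fun {W} hW => ?_
  obtain ⟨P, hP, Q, hQ, hPQ⟩ := Filter.eventually_prod_iff.mp (quotient_tendsto.eventually hW)
  obtain ⟨m, hm⟩ := (hz.frequently hP).exists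
  obtain ⟨n, hn, hmn⟩ := ((hz.frequently hQ).and_eventually (eventually_gt_atTop m)).exists
  refine ⟨_, hPQ hm hn, m, n, hmn, (γ m)⁻¹ * γ n, mul_mem (inv_mem (hγ m)) (hγ n), by group⟩

theorem IsDiscreteModCenter.mem_center_of_one_mem_closure (hΛ : IsCocompact Λ)
    (hd : IsDiscreteModCenter Λ) {γ : G} (hγ : γ ∈ Λ)
    (h : (1 : G) ∈ closure {x | ∃ g, x = g⁻¹ * γ * g}) : γ ∈ Subgroup.center G := by
  obtain ⟨K, hK, hKΛ⟩ := hΛ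
  have near_one : ∀ᶠ x in 𝓝 (1 : G), ∀ k ∈ K,
      k * x * k⁻¹ ∈ Λ → k * x * k⁻¹ ∈ Subgroup.center G := by
    refine hK.eventually_forall_of_forall_eventually fun k _ => ?_
    have : Tendsto (fun p : G × G => p.2 * p.1 * p.2⁻¹) (𝓝 (1, k)) (𝓝 (k * 1 * k⁻¹)) :=
      Continuous.tendsto (by fun_prop) (1, k)
    rw [mul_one, mul_inv_cancel] at this
    exact this.eventually hd
  obtain ⟨_, ⟨g, rfl⟩, hx⟩ :=
    ((mem_closure_iff_frequently.mp h).and_eventually near_one).exists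
  obtain ⟨δ, hδ, hδK⟩ := hKΛ g
  have conj_mem := hx _ hδK (by
    simpa [mul_assoc] using mul_mem hδ (mul_mem hγ (inv_mem hδ)))
  have := Subgroup.Normal.conj_mem inferInstance _ conj_mem δ⁻¹
  simpa [mul_assoc] using this

/-- `g⁻¹ * γ * g` depends only on the coset `Λ g`. -/
theorem IsCocompact.exists_isCompact_forall_conj_mem (hΛ : IsCocompact Λ) {γ : G}
    (hγ : γ ∈ Subgroup.centralizer (Λ : Set G)) :
    ∃ K : Set G, IsCompact K ∧ ∀ g, g⁻¹ * γ * g ∈ K := by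
  obtain ⟨K, hK, hKΛ⟩ := hΛ
  refine ⟨(fun k => k⁻¹ * γ * k) '' K, hK.image (by fun_prop), fun g => ?_⟩
  obtain ⟨δ, hδ, hδK⟩ := hKΛ g
  refine ⟨δ * g, hδK, ?_⟩
  have commute : δ * γ = γ * δ := Subgroup.mem_centralizer_iff.mp hγ δ hδ
  simp only [_root_.mul_inv_rev, mul_assoc, ← mul_assoc γ δ, ← commute, inv_mul_cancel_left]

end CocompactSubgroup

/-! ### Affine maps preserving a closed set of real numbers -/

section AffineMaps

variable {E : Set ℝ} {e r : ℝ}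

theorem mem_of_frequently_affine (hE : IsClosed E) (he : e ∈ E) (her : e ≤ r)
    (h : ∃ᶠ p : ℝ × ℝ in 𝓝 (1, 0), 1 ≤ p.1 ∧ e < p.1 * e + p.2 ∧ ∀ s ∈ E, p.1 * s + p.2 ∈ E) :
    r ∈ E := by
  obtain ⟨m, ⟨hmE, hem, hmr⟩, hmax⟩ :=
    (isCompact_Icc.inter_left hE).exists_isGreatest ⟨e, he, le_rfl, her⟩
  rcases hmr.eq_or_lt with rfl | hlt
  · exact hmE
  have moves_little : ∀ᶠ p : ℝ × ℝ in 𝓝 (1, 0), p.1 * m + p.2 < r :=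
    (Continuous.tendsto' (by fun_prop) _ _ (by simp)).eventually_lt_const hlt
  obtain ⟨p, ⟨hp, hpe, hpE⟩, hpr⟩ := (h.and_eventually moves_little).exists
  have moves_up : m < p.1 * m + p.2 := by nlinarith
  exact absurd (hmax ⟨hpE m hmE, (hem.trans moves_up.le), hpr.le⟩) moves_up.not_ge

theorem affine_inv_iff {q σ : ℝ} (hq : 0 < q) (h : ∀ s, s ∈ E ↔ q * s + σ ∈ E) (s : ℝ) :
    s ∈ E ↔ q⁻¹ * s + -(q⁻¹ * σ) ∈ E := by
  rw [h (q⁻¹ * s + -(q⁻¹ * σ)), mul_add, mul_neg, mul_inv_cancel_left₀ hq.ne',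
    mul_inv_cancel_left₀ hq.ne', neg_add_cancel_right]

theorem frequently_affine_one_le
    (h : ∃ᶠ p : ℝ × ℝ in 𝓝 (1, 0), p.1 * e + p.2 ≠ e ∧ ∀ s, s ∈ E ↔ p.1 * s + p.2 ∈ E) :
    ∃ᶠ p : ℝ × ℝ in 𝓝 (1, 0), 1 ≤ p.1 ∧ p.1 * e + p.2 ≠ e ∧ ∀ s, s ∈ E ↔ p.1 * s + p.2 ∈ E := by
  have inverse_tendsto : Tendsto (fun p : ℝ × ℝ => (p.1⁻¹, -(p.1⁻¹ * p.2))) (𝓝 (1, 0))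
      (𝓝 (1, 0)) := by
    have : ContinuousAt (fun p : ℝ × ℝ => (p.1⁻¹, -(p.1⁻¹ * p.2))) (1, 0) := by
      fun_prop (disch := norm_num)
    simpa [ContinuousAt] using this
  have positive : ∀ᶠ p : ℝ × ℝ in 𝓝 (1, 0), 0 < p.1 :=
    continuous_fst.continuousAt.eventually_const_lt one_pos
  have split : ∃ᶠ p : ℝ × ℝ in 𝓝 (1, 0),
      (1 ≤ p.1 ∧ p.1 * e + p.2 ≠ e ∧ ∀ s, s ∈ E ↔ p.1 * s + p.2 ∈ E) ∨
      (1 ≤ p.1⁻¹ ∧ p.1⁻¹ * e + -(p.1⁻¹ * p.2) ≠ e ∧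
        ∀ s, s ∈ E ↔ p.1⁻¹ * s + -(p.1⁻¹ * p.2) ∈ E) := by
    refine (h.and_eventually positive).mono fun p ⟨⟨hpe, hpE⟩, hp⟩ => ?_
    rcases le_total 1 p.1 with hle | hle
    · exact .inl ⟨hle, hpe, hpE⟩
    · refine .inr ⟨(one_le_inv₀ hp).mpr hle, fun heq => hpe ?_, affine_inv_iff hp hpE⟩
      field_simp at heq
      linarith
  rcases frequently_or_distrib.mp split with h | h
  · exact h
  · exact inverse_tendsto.frequently h

theorem eventually_mem_of_frequently_affine_ne (hE : IsClosed E) (he : e ∈ E)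
    (h : ∃ᶠ p : ℝ × ℝ in 𝓝 (1, 0), p.1 * e + p.2 ≠ e ∧ ∀ s, s ∈ E ↔ p.1 * s + p.2 ∈ E) :
    (∀ᶠ s in atTop, s ∈ E) ∨ ∀ᶠ s in atBot, s ∈ E := by
  have split : ∃ᶠ p : ℝ × ℝ in 𝓝 (1, 0),
      (1 ≤ p.1 ∧ e < p.1 * e + p.2 ∧ ∀ s ∈ E, p.1 * s + p.2 ∈ E) ∨
      (1 ≤ p.1 ∧ -e < p.1 * -e + -p.2 ∧ ∀ s ∈ -E, p.1 * s + -p.2 ∈ -E) := by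
    refine (frequently_affine_one_le h).mono fun p ⟨hp, hpe, hpE⟩ => ?_
    rcases hpe.lt_or_gt with hlt | hgt
    · refine .inr ⟨hp, by linarith, fun s hs => ?_⟩
      simpa [add_comm] using (hpE (-s)).mp hs
    · exact .inl ⟨hp, hgt, fun s => (hpE s).mp⟩
  rcases frequently_or_distrib.mp split with hup | hdown
  · exact .inl ((eventually_ge_atTop e).mono fun r hr => mem_of_frequently_affine hE he hr hup)
  · have reflect_tendsto : Tendsto (fun p : ℝ × ℝ => (p.1, -p.2)) (𝓝 (1, 0)) (𝓝 (1, 0)) :=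
      Continuous.tendsto' (by fun_prop) _ _ (by simp)
    refine .inr ((eventually_le_atBot e).mono fun r hr => ?_)
    simpa using mem_of_frequently_affine hE.neg (Set.neg_mem_neg.mpr he) (neg_le_neg hr)
      (reflect_tendsto.frequently hdown)

theorem eventually_mem_of_frequently_affine {e' : ℝ} (hE : IsClosed E) (he : e ∈ E) (he' : e' ∈ E)
    (hne : e ≠ e')
    (h : ∃ᶠ p : ℝ × ℝ in 𝓝 (1, 0), p ≠ (1, 0) ∧ ∀ s, s ∈ E ↔ p.1 * s + p.2 ∈ E) :
    (∀ᶠ s in atTop, s ∈ E) ∨ ∀ᶠ s in atBot, s ∈ E := by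
  have split : ∃ᶠ p : ℝ × ℝ in 𝓝 (1, 0),
      (p.1 * e + p.2 ≠ e ∧ ∀ s, s ∈ E ↔ p.1 * s + p.2 ∈ E) ∨
      (p.1 * e' + p.2 ≠ e' ∧ ∀ s, s ∈ E ↔ p.1 * s + p.2 ∈ E) := by
    refine h.mono fun p ⟨hp, hpE⟩ => ?_
    by_contra hfix
    have h1 : p.1 * e + p.2 = e := by_contra fun h => hfix (.inl ⟨h, hpE⟩)
    have h2 : p.1 * e' + p.2 = e' := by_contra fun h => hfix (.inr ⟨h, hpE⟩)
    have one : p.1 = 1 := mul_right_cancel₀ (sub_ne_zero.mpr hne) (by linear_combination h1 - h2)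
    exact hp (Prod.ext one (by rw [one] at h1; linarith))
  rcases frequently_or_distrib.mp split with h | h
  · exact eventually_mem_of_frequently_affine_ne hE he h
  · exact eventually_mem_of_frequently_affine_ne hE he' h

end AffineMaps

/-! ### Subgroups of `SL(2,ℂ)` -/

namespace SL2C

theorem ext_entries {g h : SL2C} (h00 : g 0 0 = h 0 0) (h01 : g 0 1 = h 0 1)
    (h10 : g 1 0 = h 1 0) (h11 : g 1 1 = h 1 1) : g = h := by
  ext i j
  fin_cases i <;> fin_cases j <;> assumption

theorem mul_apply (g h : SL2C) (i j : Fin 2) : (g * h) i j = g i 0 * h 0 j + g i 1 * h 1 j := by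
  simp [Matrix.mul_apply]

theorem coe_inv (g : SL2C) :
    (↑g⁻¹ : Matrix (Fin 2) (Fin 2) ℂ) = !![g 1 1, -g 0 1; -g 1 0, g 0 0] := by
  rw [SpecialLinearGroup.SL2_inv_expl]
  rfl

theorem det_eq_one (g : SL2C) : g 0 0 * g 1 1 - g 0 1 * g 1 0 = 1 := by
  rw [← Matrix.det_fin_two]
  exact g.det_coe

theorem apply_zero_zero_ne_zero {g : SL2C} (hg : g 1 0 = 0) : g 0 0 ≠ 0 := by
  intro h
  simpa [h, hg] using det_eq_one g

/-- The lower triangular unipotent matrix `[[1, 0], [w, 1]]`. -/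
def lMat (w : ℂ) : SL2C := ⟨!![1, 0; w, 1], by simp⟩

/-- The diagonal matrix `diag(eᵗ, e⁻ᵗ)`. Real `t` give the diagonal group `A`, imaginary `t` the
compact group `M`. -/
def dMat (t : ℂ) : SL2C :=
  ⟨!![Complex.exp t, 0; 0, Complex.exp (-t)], by simp [← Complex.exp_add]⟩

/-- The matrix `[[1, is], [0, 1]]`, lifting the element `v_s`. -/
def vMat (s : ℝ) : SL2C := uMat (s * Complex.I)

@[simp] theorem coe_uMat (z : ℂ) : (uMat z : Matrix (Fin 2) (Fin 2) ℂ) = !![1, z; 0, 1] := rfl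

@[simp] theorem coe_lMat (w : ℂ) : (lMat w : Matrix (Fin 2) (Fin 2) ℂ) = !![1, 0; w, 1] := rfl

@[simp] theorem coe_dMat (t : ℂ) : (dMat t : Matrix (Fin 2) (Fin 2) ℂ) =
    !![Complex.exp t, 0; 0, Complex.exp (-t)] := rfl

theorem uMat_add (s t : ℂ) : uMat (s + t) = uMat s * uMat t := by
  apply ext_entries <;> simp [mul_apply, add_comm]

@[simp] theorem uMat_zero : uMat 0 = 1 := by apply ext_entries <;> simp

theorem uMat_neg (s : ℂ) : uMat (-s) = (uMat s)⁻¹ := by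
  rw [eq_inv_iff_mul_eq_one, ← uMat_add, neg_add_cancel, uMat_zero]

@[simp] theorem lMat_zero : lMat 0 = 1 := by apply ext_entries <;> simp

theorem dMat_add (s t : ℂ) : dMat (s + t) = dMat s * dMat t := by
  apply ext_entries <;> simp [mul_apply, Complex.exp_add, mul_comm]

@[simp] theorem dMat_zero : dMat 0 = 1 := by apply ext_entries <;> simp

theorem dMat_neg (s : ℂ) : dMat (-s) = (dMat s)⁻¹ := by
  rw [eq_inv_iff_mul_eq_one, ← dMat_add, neg_add_cancel, dMat_zero]

theorem mul_uMat {g : SL2C} (hg : g 1 0 = 0) (z : ℂ) :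
    g * uMat z = uMat (g 0 0 ^ 2 * z) * g := by
  have det : g 0 0 * g 1 1 = 1 := by simpa [hg] using det_eq_one g
  apply ext_entries <;> simp only [mul_apply, coe_uMat, of_apply, cons_val, hg]
  · ring
  · linear_combination -(g 0 0 * z) * det
  · ring
  · ring

theorem eq_uMat {g : SL2C} (h00 : g 0 0 = 1) (h10 : g 1 0 = 0) : g = uMat (g 0 1) := by
  have h11 : g 1 1 = 1 := by simpa [h00, h10] using det_eq_one g
  apply ext_entries <;> simp [h00, h10, h11]

/-- The upper triangular subgroup. -/
def borel : Subgroup SL2C where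
  carrier := {g | g 1 0 = 0}
  mul_mem' {g h} (hg : g 1 0 = 0) (hh : h 1 0 = 0) := by simp [Matrix.mul_apply, hg, hh]
  one_mem' := by simp
  inv_mem' {g} (hg : g 1 0 = 0) := by simp [adjugate_fin_two, hg]

/-- The subgroup of upper triangular matrices with positive real diagonal, lifting `AN`. -/
def AN : Subgroup SL2C where
  carrier := {g | g 1 0 = 0 ∧ (g 0 0).im = 0 ∧ 0 < (g 0 0).re}
  mul_mem' := by
    rintro g h ⟨hg, hg', hgpos⟩ ⟨hh, hh', hhpos⟩
    refine ⟨by simp [Matrix.mul_apply, hg, hh], by simp [Matrix.mul_apply, hh, hg', hh'], ?_⟩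
    simpa [Matrix.mul_apply, hh, hg', hh'] using mul_pos hgpos hhpos
  one_mem' := by simp
  inv_mem' := by
    rintro g ⟨hg, hg', hgpos⟩
    have inverse : g 1 1 = (g 0 0)⁻¹ :=
      eq_inv_of_mul_eq_one_right (by simpa [hg] using det_eq_one g)
    have : 0 < Complex.normSq (g 0 0) := Complex.normSq_pos.mpr (apply_zero_zero_ne_zero hg)
    simp only [Set.mem_ofPred_eq, coe_inv, Matrix.of_apply, Matrix.cons_val, inverse, hg,
      Complex.inv_im, Complex.inv_re, hg', neg_zero, zero_div, true_and]
    positivity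

/-- The group of real upper triangular unipotent matrices, lifting `U`. -/
def U : Subgroup SL2C where
  carrier := Set.range fun t : ℝ => uMat t
  mul_mem' := by
    rintro _ _ ⟨s, rfl⟩ ⟨t, rfl⟩
    exact ⟨s + t, by simp [uMat_add]⟩
  one_mem' := ⟨0, by simp⟩
  inv_mem' := by
    rintro _ ⟨s, rfl⟩
    exact ⟨-s, by simp [uMat_neg]⟩

/-- The image of `SL(2, ℝ)` in `SL(2, ℂ)`, lifting `H`. -/
def realSL : Subgroup SL2C := (SpecialLinearGroup.map (algebraMap ℝ ℂ)).range

theorem mem_borel_iff {g : SL2C} : g ∈ borel ↔ g 1 0 = 0 := Iff.rfl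

theorem mem_AN_iff {g : SL2C} : g ∈ AN ↔ g 1 0 = 0 ∧ (g 0 0).im = 0 ∧ 0 < (g 0 0).re := Iff.rfl

theorem mem_realSL_iff {g : SL2C} : g ∈ realSL ↔ ∀ i j, (g i j).im = 0 := by
  constructor
  · rintro ⟨r, rfl⟩ i j
    simp [SpecialLinearGroup.map_apply_coe]
  · intro hg
    have ofReal_re (i j : Fin 2) : ((g i j).re : ℂ) = g i j := Complex.ext rfl (by simp [hg])
    refine ⟨⟨Matrix.of fun i j => (g i j).re, ?_⟩, ?_⟩
    · apply Complex.ofReal_injective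
      simpa [Matrix.det_fin_two, ofReal_re] using det_eq_one g
    · apply ext_entries <;> exact ofReal_re _ _

theorem uMat_mem_U (t : ℝ) : uMat t ∈ U := ⟨t, rfl⟩

theorem uMat_mem_AN (z : ℂ) : uMat z ∈ AN := by simp [mem_AN_iff]

theorem U_le_realSL : U ≤ realSL := by
  rintro _ ⟨t, rfl⟩
  simp [mem_realSL_iff, Fin.forall_fin_two]

instance : IsTopologicalGroup SL2C := SpecialLinearGroup.topologicalGroup

instance : LocallyCompactSpace SL2C :=
  haveI : LocallyCompactSpace (Matrix (Fin 2) (Fin 2) ℂ) :=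
    inferInstanceAs (LocallyCompactSpace (Fin 2 → Fin 2 → ℂ))
  SpecialLinearGroup.isClosedEmbedding_val.locallyCompactSpace

@[fun_prop]
theorem continuous_apply (i j : Fin 2) : Continuous fun g : SL2C => g i j :=
  (continuous_apply_apply i j).comp continuous_subtype_val

theorem continuous_iff_entries {X : Type*} [TopologicalSpace X] {f : X → SL2C} :
    Continuous f ↔ ∀ i j, Continuous fun x => f x i j := by
  refine SpecialLinearGroup.isClosedEmbedding_val.isInducing.continuous_iff.trans ?_
  exact continuous_pi_iff.trans (forall_congr' fun _ => continuous_pi_iff)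

theorem tendsto_iff_entries {ι : Type*} {l : Filter ι} {f : ι → SL2C} {g : SL2C} :
    Tendsto f l (𝓝 g) ↔ ∀ i j, Tendsto (fun x => f x i j) l (𝓝 (g i j)) := by
  refine SpecialLinearGroup.isClosedEmbedding_val.isInducing.tendsto_nhds_iff.trans ?_
  exact tendsto_pi_nhds.trans (forall_congr' fun _ => tendsto_pi_nhds)

@[fun_prop]
theorem continuous_uMat : Continuous uMat := by
  simp only [continuous_iff_entries, Fin.forall_fin_two, coe_uMat, of_apply, cons_val]
  refine ⟨⟨?_, ?_⟩, ?_, ?_⟩ <;> fun_prop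

@[fun_prop]
theorem continuous_lMat : Continuous lMat := by
  simp only [continuous_iff_entries, Fin.forall_fin_two, coe_lMat, of_apply, cons_val]
  refine ⟨⟨?_, ?_⟩, ?_, ?_⟩ <;> fun_prop

@[fun_prop]
theorem continuous_dMat : Continuous dMat := by
  simp only [continuous_iff_entries, Fin.forall_fin_two, coe_dMat, of_apply, cons_val]
  refine ⟨⟨?_, ?_⟩, ?_, ?_⟩ <;> fun_prop

end SL2C

/-! ### Minimality of the action of the Borel subgroup -/

namespace SL2C

theorem mem_center_iff {g : SL2C} :
    g ∈ Subgroup.center SL2C ↔ g 0 1 = 0 ∧ g 1 0 = 0 ∧ g 0 0 = g 1 1 := by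
  constructor
  · intro hg
    have commute (h : SL2C) : h * g = g * h := Subgroup.mem_center_iff.mp hg h
    have hl : g 0 1 = 0 := by
      simpa [mul_apply] using congr_arg (fun k : SL2C => k 0 0) (commute (lMat 1))
    obtain ⟨h10, h00⟩ : g 1 0 = 0 ∧ g 0 1 + g 1 1 = g 0 0 + g 0 1 := by
      simpa [mul_apply] using
        congr_arg (fun k : SL2C => (k 0 0, k 0 1)) (commute (uMat 1))
    exact ⟨hl, h10, by linear_combination -h00⟩
  · rintro ⟨h01, h10, h00⟩
    refine Subgroup.mem_center_iff.mpr fun h => ?_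
    apply ext_entries <;> simp [Matrix.mul_apply, h01, h10, h00, mul_comm]

variable {Λ : Subgroup SL2C} {Y : Set SL2C}

theorem tendsto_dMat_conj_uMat (w : ℂ) :
    Tendsto (fun t : ℝ => (dMat t)⁻¹ * uMat w * dMat t) atTop (𝓝 1) := by
  have conj_eq (t : ℝ) : (dMat t)⁻¹ * uMat w * dMat t = uMat (Real.exp (-(2 * t)) * w) := by
    rw [← dMat_neg, mul_uMat (by simp), mul_assoc, ← dMat_add, neg_add_cancel, dMat_zero, mul_one]
    simp [← Complex.exp_nat_mul]
  have exp_tendsto : Tendsto (fun t : ℝ => (Real.exp (-(2 * t)) * w : ℂ)) atTop (𝓝 (0 * w)) := by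
    refine Tendsto.mul_const w ((Complex.continuous_ofReal.tendsto' 0 0 rfl).comp ?_)
    exact Real.tendsto_exp_neg_atTop_nhds_zero.comp (tendsto_id.const_mul_atTop two_pos)
  simp_rw [conj_eq]
  exact (continuous_uMat.tendsto' _ _ (by simp)).comp exp_tendsto

theorem eq_zero_of_conj_uMat_mem (hΛ : IsCocompact Λ) (hd : IsDiscreteModCenter Λ) {y : SL2C}
    {w : ℂ} (h : y * uMat w * y⁻¹ ∈ Λ) : w = 0 := by
  have one_mem_closure : (1 : SL2C) ∈ closure {x | ∃ g, x = g⁻¹ * (y * uMat w * y⁻¹) * g} :=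
    mem_closure_of_tendsto (tendsto_dMat_conj_uMat w)
      (.of_forall fun t => ⟨y * dMat t, by group⟩)
  have central := Subgroup.Normal.conj_mem inferInstance _
    (hd.mem_center_of_one_mem_closure hΛ h one_mem_closure) y⁻¹
  have : uMat w ∈ Subgroup.center SL2C := by simpa [mul_assoc] using central
  simpa using (mem_center_iff.mp this).1

theorem exists_norm_apply_le_of_isCompact {K : Set SL2C} (hK : IsCompact K) (i j : Fin 2) :
    ∃ R, ∀ g ∈ K, ‖g i j‖ ≤ R :=
  hK.exists_bound_of_continuousOn (continuous_apply i j).continuousOn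

theorem not_forall_norm_exp_mul_le {a : ℝ} (ha : 0 < a) {b : ℂ} (hb : b ≠ 0) (R : ℝ) :
    ¬ ∀ t : ℝ, ‖(Real.exp (a * t) : ℂ) * b‖ ≤ R := by
  intro h
  have unbounded : Tendsto (fun t : ℝ => ‖(Real.exp (a * t) : ℂ) * b‖) atTop atTop := by
    simp only [norm_mul, Complex.norm_real, Real.norm_eq_abs, Real.abs_exp]
    exact (Real.tendsto_exp_atTop.comp (tendsto_id.const_mul_atTop ha)).atTop_mul_const
      (norm_pos_iff.mpr hb)
  obtain ⟨t, ht⟩ := (unbounded.eventually_gt_atTop R).exists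
  exact (h t).not_gt ht

/-- Conjugation by `diag(eᵗ, e⁻ᵗ)` scales the off-diagonal entries by `e^{±2t}`. -/
theorem apply_zero_one_eq_zero_of_conj_mem {K : Set SL2C} (hK : IsCompact K) {γ : SL2C}
    (h : ∀ g, g⁻¹ * γ * g ∈ K) (g : SL2C) :
    (g⁻¹ * γ * g) 0 1 = 0 ∧ (g⁻¹ * γ * g) 1 0 = 0 := by
  set p := g⁻¹ * γ * g
  have conj_mem (t : ℝ) : dMat t * p * dMat (-t) ∈ K := by
    have := h (g * dMat (-t))
    rw [dMat_neg] at this ⊢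
    simpa [p, mul_assoc] using this
  obtain ⟨R, hR⟩ := exists_norm_apply_le_of_isCompact hK 0 1
  obtain ⟨R', hR'⟩ := exists_norm_apply_le_of_isCompact hK 1 0
  have exp_sq (t : ℝ) : (Real.exp (2 * t) : ℂ) = Complex.exp t * Complex.exp t := by
    push_cast
    rw [← Complex.exp_add, two_mul]
  constructor <;> by_contra hne
  · refine not_forall_norm_exp_mul_le two_pos hne R fun t => ?_
    have := hR _ (conj_mem t)
    simp only [mul_apply, coe_dMat, of_apply, cons_val] at this
    rw [exp_sq]
    ring_nf at this ⊢
    exact this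
  · refine not_forall_norm_exp_mul_le two_pos hne R' fun t => ?_
    have := hR' _ (conj_mem (-t))
    simp only [mul_apply, coe_dMat, of_apply, cons_val] at this
    rw [exp_sq]
    push_cast at this
    ring_nf at this ⊢
    exact this

theorem mem_center_of_conj_mem {K : Set SL2C} (hK : IsCompact K) {γ : SL2C}
    (h : ∀ g, g⁻¹ * γ * g ∈ K) : γ ∈ Subgroup.center SL2C := by
  obtain ⟨h01, h10⟩ : γ 0 1 = 0 ∧ γ 1 0 = 0 := by
    simpa using apply_zero_one_eq_zero_of_conj_mem hK h 1
  have hu := (apply_zero_one_eq_zero_of_conj_mem hK h (uMat 1)).1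
  simp only [mul_apply, coe_inv, coe_uMat, of_apply, cons_val, h01, h10] at hu
  exact mem_center_iff.mpr ⟨h01, h10, by linear_combination hu⟩

theorem not_le_center (hΛ : IsCocompact Λ) : ¬ Λ ≤ Subgroup.center SL2C := by
  intro hle
  obtain ⟨K, hK, hKΛ⟩ := hΛ
  obtain ⟨R, hR⟩ := exists_norm_apply_le_of_isCompact hK 0 0
  refine not_forall_norm_exp_mul_le one_pos one_ne_zero R fun t => ?_
  obtain ⟨γ, hγ, hγK⟩ := hKΛ (dMat t)
  obtain ⟨h01, -, h11⟩ := mem_center_iff.mp (hle hγ)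
  have norm_γ : ‖γ 0 0‖ = 1 := by
    have : γ 0 0 ^ 2 = 1 := by
      have := det_eq_one γ
      rw [h01, ← h11] at this
      linear_combination this
    exact Complex.norm_eq_one_of_pow_eq_one this two_ne_zero
  simpa [mul_apply, norm_γ] using hR _ hγK

/-- The derived group of the Borel subgroup is unipotent, so otherwise `Λ` would be abelian, and
hence central. -/
theorem not_forall_conj_mem_borel (hΛ : IsCocompact Λ) (hd : IsDiscreteModCenter Λ) (y : SL2C) :
    ¬ ∀ γ ∈ Λ, y⁻¹ * γ * y ∈ borel := by
  intro hborel
  have commute : ∀ γ ∈ Λ, ∀ δ ∈ Λ, γ * δ = δ * γ := by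
    intro γ hγ δ hδ
    set p := y⁻¹ * γ * y
    set q := y⁻¹ * δ * y
    have hp : p 1 0 = 0 := hborel γ hγ
    have hq : q 1 0 = 0 := hborel δ hδ
    have unipotent : p * q * p⁻¹ * q⁻¹ = uMat ((p * q * p⁻¹ * q⁻¹) 0 1) := by
      have hp' := det_eq_one p
      have hq' := det_eq_one q
      rw [hp, mul_zero, sub_zero] at hp'
      rw [hq, mul_zero, sub_zero] at hq'
      refine eq_uMat ?_ (by simp [Matrix.mul_apply, adjugate_fin_two, hp, hq])
      simp only [mul_apply, coe_inv, of_apply, cons_val, hp, hq]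
      linear_combination (q 0 0 * q 1 1) * hp' + hq'
    have conj_eq : y * (p * q * p⁻¹ * q⁻¹) * y⁻¹ = γ * δ * γ⁻¹ * δ⁻¹ := by
      simp only [p, q]
      group
    have trivial_commutator : γ * δ * γ⁻¹ * δ⁻¹ = 1 := by
      rw [← conj_eq, unipotent, eq_zero_of_conj_uMat_mem hΛ hd (y := y) (w := (_ : SL2C) 0 1) ?_]
      · simp
      · rw [← unipotent, conj_eq]
        exact mul_mem (mul_mem (mul_mem hγ hδ) (inv_mem hγ)) (inv_mem hδ)
    exact commutatorElement_eq_one_iff_mul_comm.mp trivial_commutator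
  refine not_le_center hΛ fun γ hγ => ?_
  obtain ⟨K, hK, hγK⟩ := hΛ.exists_isCompact_forall_conj_mem
    (Subgroup.mem_centralizer_iff.mpr fun δ hδ => commute δ hδ γ hγ)
  exact mem_center_of_conj_mem hK hγK

theorem dMat_mul_eq_lMat_mul {g : SL2C} (hg : g 0 0 ≠ 0) (t : ℂ) :
    ∃ b ∈ borel, dMat t * g = lMat (Complex.exp (-(2 * t)) * (g 1 0 / g 0 0)) * b := by
  refine ⟨(lMat _)⁻¹ * (dMat t * g), ?_, (mul_inv_cancel_left _ _).symm⟩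
  have exp_cancel : Complex.exp (-(2 * t)) * Complex.exp t = Complex.exp (-t) := by
    rw [← Complex.exp_add]
    ring_nf
  simp only [mem_borel_iff, mul_apply, coe_inv, coe_lMat, coe_dMat, of_apply, cons_val]
  rw [← exp_cancel]
  field_simp
  ring

theorem tendsto_exp_neg_mul_apply_div {g : SL2C} (hg : g 0 0 ≠ 0) :
    Tendsto (fun p : ℝ × SL2C => Complex.exp (-(2 * p.1)) * (p.2 1 0 / p.2 0 0))
      (atTop ×ˢ 𝓝 g) (𝓝 0) := by
  have exp_tendsto : Tendsto (fun t : ℝ => Complex.exp (-(2 * t))) atTop (𝓝 0) := by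
    have := (Complex.continuous_ofReal.tendsto' 0 0 rfl).comp
      (Real.tendsto_exp_neg_atTop_nhds_zero.comp (tendsto_id.const_mul_atTop two_pos))
    simpa [Function.comp_def] using this
  have ratio_tendsto : Tendsto (fun h : SL2C => h 1 0 / h 0 0) (𝓝 g) (𝓝 (g 1 0 / g 0 0)) :=
    ((continuous_apply 1 0).tendsto g).div ((continuous_apply 0 0).tendsto g) hg
  simpa using (exp_tendsto.comp tendsto_fst).mul (ratio_tendsto.comp tendsto_snd)

/-- The element `diag(eᵗ, e⁻ᵗ)` contracts the big cell to `borel`. -/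
theorem eventually_mul_dMat_mul_notMem (hY : IsClosedInvariant Λ borel Y) {z : SL2C} (hz : z ∉ Y)
    {g : SL2C} (hg : g 0 0 ≠ 0) :
    ∀ᶠ p in (atTop : Filter ℝ) ×ˢ 𝓝 g, z * dMat (p.1 : ℝ) * p.2 ∉ Y := by
  have near_zero : ∀ᶠ w in 𝓝 (0 : ℂ), z * lMat w ∉ Y :=
    (Continuous.tendsto' (f := fun w => z * lMat w) (by fun_prop) 0 z (by simp)).eventually
      (hY.isClosed.isOpen_compl.mem_nhds hz)
  filter_upwards [(tendsto_exp_neg_mul_apply_div hg).eventually near_zero,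
    ((continuous_apply 0 0).continuousAt.eventually_ne hg).prod_inr atTop] with ⟨t, h⟩ hw h0 hmem
  obtain ⟨b, hb, factor⟩ := dMat_mul_eq_lMat_mul h0 (t : ℂ)
  have := hY.mul_mem_right _ hmem _ (inv_mem hb)
  rw [mul_assoc z, factor, ← mul_assoc, mul_inv_cancel_right] at this
  exact hw this

theorem exists_forall_apply_zero_zero_eq_zero (hΛ : IsCocompact Λ)
    (hY : IsClosedInvariant Λ borel Y) (hne : Y ≠ Set.univ) :
    ∃ z, ∀ g, z * g ∈ Y → g 0 0 = 0 := by
  obtain ⟨z, hz⟩ := (Set.ne_univ_iff_exists_notMem Y).mp hne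
  have invariant : ∀ γ ∈ Λ, ∀ g ∈ Yᶜ, γ * g ∈ Yᶜ := fun γ hγ g hg h =>
    hg (by simpa using hY.mul_mem_left _ (inv_mem hγ) _ h)
  obtain ⟨z', hz'⟩ := hΛ.exists_forall_mul_mem_of_eventually_prod (S := {g : SL2C | g 0 0 ≠ 0})
    (x := fun t : ℝ => z * dMat t) invariant fun g hg => eventually_mul_dMat_mul_notMem hY hz hg
  exact ⟨z', fun g hg => by_contra fun h => hz' g h hg⟩

theorem eq_univ_of_isClosedInvariant_borel (hΛ : IsCocompact Λ) (hd : IsDiscreteModCenter Λ)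
    (hY : IsClosedInvariant Λ borel Y) (hne : Y.Nonempty) : Y = Set.univ := by
  by_contra hproper
  obtain ⟨z, hz⟩ := exists_forall_apply_zero_zero_eq_zero hΛ hY hproper
  obtain ⟨y, hy⟩ := hne
  have apply_eq_zero {x : SL2C} (hx : x ∈ Y) : (z⁻¹ * x) 0 0 = 0 := hz _ (by simpa using hx)
  refine not_forall_conj_mem_borel hΛ hd y fun γ hγ => ?_
  have regroup : y⁻¹ * γ * y = (z⁻¹ * y)⁻¹ * (z⁻¹ * (γ * y)) := by group
  rw [mem_borel_iff, regroup, mul_apply, apply_eq_zero (hY.mul_mem_left γ hγ y hy), coe_inv]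
  simp only [of_apply, cons_val, apply_eq_zero hy]
  ring

end SL2C

/-! ### Minimality of the action of `AN` -/

namespace SL2C

variable {Λ : Subgroup SL2C} {T X Y : Set SL2C}

theorem uMat_mul_mul_uMat_eq {g : SL2C} (hg : g 1 0 ≠ 0) (t : ℂ) :
    uMat ((Complex.exp t - g 0 0) / g 1 0) * g *
        uMat (-(Complex.exp (-t) * (g 0 1 + (Complex.exp t - g 0 0) / g 1 0 * g 1 1))) =
      dMat t * lMat (Complex.exp t * g 1 0) := by
  have det := det_eq_one g
  have exp_cancel : Complex.exp t * Complex.exp (-t) = 1 := by simp [← Complex.exp_add]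
  obtain ⟨q, hq⟩ : ∃ q, q = (Complex.exp t - g 0 0) / g 1 0 := ⟨_, rfl⟩
  rw [← hq]
  rw [eq_div_iff hg] at hq
  apply ext_entries <;>
    simp only [mul_apply, coe_uMat, coe_lMat, coe_dMat, of_apply, cons_val]
  · linear_combination hq
  · linear_combination -(g 0 1 + q * g 1 1) * (exp_cancel + Complex.exp (-t) * hq)
  · linear_combination -g 1 0 * exp_cancel
  · linear_combination Complex.exp (-t) * det - g 1 1 * (exp_cancel + Complex.exp (-t) * hq)

theorem dMat_mem_of_frequently (hT : IsClosed T)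
    (hinv : ∀ g ∈ T, ∀ z w, uMat z * g * uMat w ∈ T)
    (h : ∃ᶠ g in 𝓝 1, g ∈ T ∧ g 1 0 ≠ 0) (t : ℂ) : dMat t ∈ T := by
  have limit : Tendsto (fun g : SL2C => dMat t * lMat (Complex.exp t * g 1 0)) (𝓝 1)
      (𝓝 (dMat t)) := Continuous.tendsto' (by fun_prop) _ _ (by simp)
  refine hT.mem_of_frequently_of_tendsto (h.mono fun g hg => ?_) limit
  rw [← uMat_mul_mul_uMat_eq hg.2]
  exact hinv g hg.1 _ _

theorem dMat_mem_borel (t : ℂ) : dMat t ∈ borel := by simp [mem_borel_iff]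

theorem exists_mul_dMat_mem_AN {g : SL2C} (hg : g ∈ borel) :
    ∃ θ ∈ Set.Icc (-Real.pi) Real.pi, g * dMat (-(θ * Complex.I)) ∈ AN := by
  refine ⟨(g 0 0).arg, ⟨(Complex.neg_pi_lt_arg _).le, Complex.arg_le_pi _⟩, ?_⟩
  have apply_eq : (g * dMat (-((g 0 0).arg * Complex.I))) 0 0 = (‖g 0 0‖ : ℂ) := by
    rw [mul_apply, coe_dMat]
    simp only [of_apply, cons_val, mul_zero, add_zero]
    nth_rw 1 [← Complex.norm_mul_exp_arg_mul_I (g 0 0)]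
    rw [mul_assoc, ← Complex.exp_add, add_neg_cancel, Complex.exp_zero, mul_one]
  refine mem_AN_iff.mpr ⟨mul_mem hg (dMat_mem_borel _), ?_, ?_⟩ <;> rw [apply_eq]
  · simp
  · simpa using apply_zero_zero_ne_zero hg

theorem dMat_mem_normalizer_AN (t : ℂ) : dMat t ∈ Subgroup.normalizer (AN : Set SL2C) := by
  refine Subgroup.mem_set_normalizer_iff''.mpr fun h => ?_
  have exp_cancel : Complex.exp (-t) * Complex.exp t = 1 := by simp [← Complex.exp_add]
  have apply_zero_zero : ((dMat t)⁻¹ * h * dMat t) 0 0 = h 0 0 := by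
    simp only [mul_apply, coe_inv, coe_dMat, of_apply, cons_val]
    linear_combination h 0 0 * exp_cancel
  have apply_one_zero : ((dMat t)⁻¹ * h * dMat t) 1 0 = Complex.exp t * Complex.exp t * h 1 0 := by
    simp only [mul_apply, coe_inv, coe_dMat, of_apply, cons_val]
    ring
  simp [mem_AN_iff, apply_zero_zero, apply_one_zero]

/-- `borel` is the product of `AN` and a compact group, so the saturation of `Y` under the latter
is closed. -/
theorem exists_mul_dMat_mem (hΛ : IsCocompact Λ) (hd : IsDiscreteModCenter Λ)
    (hY : IsClosedInvariant Λ AN Y) (hne : Y.Nonempty) (g : SL2C) :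
    ∃ θ ∈ Set.Icc (-Real.pi) Real.pi, g * dMat (-(θ * Complex.I)) ∈ Y := by
  set M := (fun θ : ℝ => dMat (θ * Complex.I)) '' Set.Icc (-Real.pi) Real.pi
  have hM : IsCompact M := isCompact_Icc.image (by fun_prop)
  have invariant : IsClosedInvariant Λ borel (Y * M) := by
    refine ⟨hY.isClosed.mul_right_of_isCompact hM, ?_, ?_⟩
    · rintro γ hγ _ ⟨y, hy, m, hm, rfl⟩
      exact ⟨γ * y, hY.mul_mem_left γ hγ y hy, m, hm, mul_assoc _ _ _⟩
    · rintro _ ⟨y, hy, _, ⟨θ, -, rfl⟩, rfl⟩ b hb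
      obtain ⟨φ, hφ, h⟩ := exists_mul_dMat_mem_AN (mul_mem (dMat_mem_borel (θ * Complex.I)) hb)
      refine ⟨_, hY.mul_mem_right y hy _ h, _, ⟨φ, hφ, rfl⟩, ?_⟩
      simp [dMat_neg, mul_assoc]
  have hg : g ∈ Y * M := by
    obtain ⟨y, hy⟩ := hne
    rw [eq_univ_of_isClosedInvariant_borel hΛ hd invariant
      ⟨y, y, hy, _, ⟨0, by simp [Real.pi_nonneg], rfl⟩, by simp⟩]
    trivial
  obtain ⟨y, hy, _, ⟨θ, hθ, rfl⟩, rfl⟩ := hg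
  exact ⟨θ, hθ, by simpa [dMat_neg] using hy⟩

theorem frequently_mem_inv_mul_apply_one_zero_ne_zero (hΛ : IsCocompact Λ)
    (hd : IsDiscreteModCenter Λ) (hY : IsMinimalInvariant Λ AN Y) :
    ∃ᶠ g in 𝓝 (1 : SL2C), g ∈ Y⁻¹ * Y ∧ g 1 0 ≠ 0 := by
  obtain ⟨y, hy⟩ := hY.nonempty
  choose θ hθ h using fun w : ℂ =>
    exists_mul_dMat_mem hΛ hd hY.isClosedInvariant hY.nonempty (y * lMat w)
  obtain ⟨φ, -, hφ⟩ := isCompact_Icc.exists_mapClusterPt (f := 𝓝[≠] (0 : ℂ)) (u := θ)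
    (tendsto_principal.mpr (.of_forall hθ))
  obtain ⟨F, hF, θ_tendsto⟩ := mapClusterPt_iff_ultrafilter.mp hφ
  have lMat_tendsto : Tendsto lMat F (𝓝 1) :=
    (continuous_lMat.tendsto' 0 1 lMat_zero).mono_left (hF.trans nhdsWithin_le_nhds)
  have dMat_tendsto : Tendsto (fun w => dMat (-(θ w * Complex.I))) F
      (𝓝 (dMat (-(φ * Complex.I)))) :=
    Tendsto.comp (Continuous.tendsto (by fun_prop : Continuous fun r : ℝ =>
      dMat (-(r * Complex.I))) φ) θ_tendsto
  have limit_mem : dMat (-(φ * Complex.I)) ∈ Y⁻¹ * Y := by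
    have := (tendsto_const_nhds (x := y)).mul (lMat_tendsto.mul dMat_tendsto)
    simp only [← mul_assoc, mul_one] at this
    exact mem_inv_mul_iff.mpr
      ⟨y, hy, hY.isClosedInvariant.isClosed.mem_of_tendsto this (.of_forall h)⟩
  have return_tendsto : Tendsto
      (fun w => dMat (-(φ * Complex.I)) * (lMat w * dMat (-(θ w * Complex.I)))⁻¹) F (𝓝 1) := by
    have := (lMat_tendsto.mul dMat_tendsto).inv.const_mul (dMat (-(φ * Complex.I)))
    rwa [one_mul, mul_inv_cancel] at this
  have w_ne_zero : ∀ᶠ w : ℂ in F, w ≠ 0 := hF self_mem_nhdsWithin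
  refine return_tendsto.frequently (w_ne_zero.mono fun w hw => ⟨?_, ?_⟩).frequently
  · refine (hY.mul_mem_inv_mul_iff limit_mem (dMat_mem_normalizer_AN _)).mpr
      (inv_mem_inv_mul_iff.mpr (mem_inv_mul_iff.mpr ⟨y, hy, ?_⟩))
    simpa [mul_assoc] using h w
  · simp only [mul_apply, coe_inv, coe_lMat, coe_dMat, of_apply, cons_val]
    simpa using hw

theorem eq_univ_of_isMinimalInvariant_AN (hΛ : IsCocompact Λ) (hd : IsDiscreteModCenter Λ)
    (hY : IsMinimalInvariant Λ AN Y) : Y = Set.univ := by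
  have dMat_mem : ∀ t, dMat t ∈ Y⁻¹ * Y :=
    dMat_mem_of_frequently (hY.isClosedInvariant.isClosed_inv_mul hΛ hY.isClosedInvariant)
      (fun g hg z w => hY.isClosedInvariant.mul_mem_inv_mul hY.isClosedInvariant
        (uMat_mem_AN z) hg (uMat_mem_AN w))
      (frequently_mem_inv_mul_apply_one_zero_ne_zero hΛ hd hY)
  refine Set.eq_univ_of_forall fun g => ?_
  obtain ⟨θ, -, hθ⟩ := exists_mul_dMat_mem hΛ hd hY.isClosedInvariant hY.nonempty g
  simpa [dMat_neg] using hY.mul_mem_of_mem_normalizer hY.isClosedInvariant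
    (dMat_mem (θ * Complex.I)) (dMat_mem_normalizer_AN _) _ hθ

theorem eq_univ_of_isClosedInvariant_AN (hΛ : IsCocompact Λ) (hd : IsDiscreteModCenter Λ)
    (hY : IsClosedInvariant Λ AN Y) (hne : Y.Nonempty) : Y = Set.univ := by
  obtain ⟨Z, hZY, hZ⟩ := hY.exists_isMinimalInvariant_subset hΛ hne
  rwa [eq_univ_of_isMinimalInvariant_AN hΛ hd hZ, Set.univ_subset_iff] at hZY

theorem exists_eq_vMat_mul_of_mem_AN {g : SL2C} (hg : g ∈ AN) :
    ∃ s : ℝ, ∃ h ∈ realSL, g = vMat s * h := by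
  obtain ⟨h10, him, hpos⟩ := mem_AN_iff.mp hg
  have h00 : g 0 0 = ((g 0 0).re : ℂ) := Complex.ext rfl (by simp [him])
  have h11 : g 1 1 = ((g 0 0).re⁻¹ : ℝ) := by
    rw [Complex.ofReal_inv, ← h00]
    exact eq_inv_of_mul_eq_one_right (by simpa [h10] using det_eq_one g)
  refine ⟨(g 0 1).im * (g 0 0).re, (vMat _)⁻¹ * g, ?_, (mul_inv_cancel_left _ _).symm⟩
  simp only [mem_realSL_iff, Fin.forall_fin_two, vMat, mul_apply, coe_inv, coe_uMat, of_apply,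
    cons_val, h10, h11]
  simp [him, hpos.ne']

theorem eq_univ_of_forall_mul_vMat_mem (hΛ : IsCocompact Λ) (hd : IsDiscreteModCenter Λ)
    (hX : IsClosedInvariant Λ realSL X) {z : SL2C} (hz : ∀ r, z * vMat r ∈ X) :
    X = Set.univ := by
  have hW : IsClosedInvariant Λ AN {g | ∀ a ∈ AN, g * a ∈ X} := by
    refine ⟨?_, fun γ hγ g hg a ha => ?_, fun g hg b hb a ha => ?_⟩
    · simp only [Set.ofPred_forall]
      exact isClosed_biInter fun a _ => hX.isClosed.preimage (continuous_mul_const a)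
    · simpa [mul_assoc] using hX.mul_mem_left γ hγ _ (hg a ha)
    · simpa [mul_assoc] using hg (b * a) (mul_mem hb ha)
  have hzW : z ∈ {g | ∀ a ∈ AN, g * a ∈ X} := fun a ha => by
    obtain ⟨s, h, hh, rfl⟩ := exists_eq_vMat_mul_of_mem_AN ha
    simpa [mul_assoc] using hX.mul_mem_right _ (hz s) h hh
  have W_eq := eq_univ_of_isClosedInvariant_AN hΛ hd hW ⟨z, hzW⟩
  refine Set.eq_univ_of_forall fun g => ?_
  simpa using (W_eq ▸ Set.mem_univ g : g ∈ {g | ∀ a ∈ AN, g * a ∈ X}) 1 (one_mem AN)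

end SL2C

/-! ### The transversal to `SL(2,ℝ)` under conjugation by `U` -/

namespace SL2C

/-- Matrices `a + iX` with `a` real and `X` a traceless real matrix. Near the identity they form a
transversal to `realSL`. -/
def IsNormalForm (p : SL2C) : Prop :=
  p 1 1 = starRingEnd ℂ (p 0 0) ∧ (p 0 1).re = 0 ∧ (p 1 0).re = 0

/-- The real part of a complex matrix, normalised to determinant `1` and inverted. -/
def reInv (g : SL2C) : Matrix (Fin 2) (Fin 2) ℝ :=
  (√((g 0 0).re * (g 1 1).re - (g 0 1).re * (g 1 0).re))⁻¹ •
    !![(g 1 1).re, -(g 0 1).re; -(g 1 0).re, (g 0 0).re]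

theorem tendsto_reInv (i j : Fin 2) :
    Tendsto (fun g => reInv g i j) (𝓝 1) (𝓝 ((1 : Matrix (Fin 2) (Fin 2) ℝ) i j)) := by
  have scale : Tendsto (fun g : SL2C => (√((g 0 0).re * (g 1 1).re - (g 0 1).re * (g 1 0).re))⁻¹)
      (𝓝 1) (𝓝 1) := by
    have : Tendsto (fun g : SL2C => √((g 0 0).re * (g 1 1).re - (g 0 1).re * (g 1 0).re))
        (𝓝 1) (𝓝 1) := Continuous.tendsto' (by fun_prop) _ _ (by simp)
    simpa using this.inv₀ one_ne_zero
  rw [← one_mul ((1 : Matrix (Fin 2) (Fin 2) ℝ) i j)]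
  refine scale.mul (Continuous.tendsto' ?_ 1 _ ?_)
  · fin_cases i <;> fin_cases j <;>
      simp only [Fin.zero_eta, Fin.mk_one, of_apply, cons_val] <;> fun_prop
  · fin_cases i <;> fin_cases j <;> simp

theorem det_reInv {g : SL2C} (hg : 0 < (g 0 0).re * (g 1 1).re - (g 0 1).re * (g 1 0).re) :
    (reInv g).det = 1 := by
  rw [reInv, Matrix.det_smul, Matrix.det_fin_two_of, Fintype.card_fin, inv_pow, Real.sq_sqrt hg.le,
    inv_mul_eq_one₀ hg.ne']
  ring

theorem isNormalForm_mul_of_eq_reInv {g k : SL2C} (hk : ∀ i j, k i j = reInv g i j) :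
    IsNormalForm (g * k) := by
  have det_im := congrArg Complex.im (det_eq_one g)
  simp only [Complex.sub_im, Complex.mul_im, Complex.one_im] at det_im
  simp only [IsNormalForm, Complex.ext_iff, mul_apply, hk, reInv, Complex.conj_re, Complex.conj_im,
    Complex.add_re, Complex.add_im, Complex.mul_re, Complex.mul_im, Complex.ofReal_re,
    Complex.ofReal_im, Matrix.smul_apply, of_apply, cons_val, smul_eq_mul]
  refine ⟨⟨by ring, ?_⟩, by ring, by ring⟩
  linear_combination
    (√((g 0 0).re * (g 1 1).re - (g 0 1).re * (g 1 0).re))⁻¹ * det_im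

theorem exists_tendsto_isNormalForm_mul : ∃ k : SL2C → SL2C, Tendsto k (𝓝 1) (𝓝 1) ∧
    ∀ᶠ g in 𝓝 1, k g ∈ realSL ∧ IsNormalForm (g * k g) := by
  have positive : ∀ᶠ g : SL2C in 𝓝 1,
      0 < (g 0 0).re * (g 1 1).re - (g 0 1).re * (g 1 0).re :=
    (Continuous.tendsto' (by fun_prop) 1 1 (by simp)).eventually_const_lt one_pos
  have lift : ∀ᶠ g : SL2C in 𝓝 1, ∃ k : SL2C, ∀ i j, k i j = reInv g i j :=
    positive.mono fun g hg =>
      ⟨SpecialLinearGroup.map (algebraMap ℝ ℂ) ⟨reInv g, det_reInv hg⟩, fun i j => rfl⟩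
  obtain ⟨k, hk⟩ := lift.choice
  refine ⟨k, tendsto_iff_entries.mpr fun i j => ?_, hk.mono fun g hg =>
    ⟨mem_realSL_iff.mpr fun i j => by simp [hg], isNormalForm_mul_of_eq_reInv hg⟩⟩
  have := (Complex.continuous_ofReal.tendsto _).comp (tendsto_reInv i j)
  refine (this.congr' (hk.mono fun g hg => (hg i j).symm)).trans_eq ?_
  fin_cases i <;> fin_cases j <;> simp

theorem exists_quadratic_root {γ δ c : ℝ} (h : γ ≠ 0 ∨ δ ≠ 0) (hc : 0 ≤ γ * c) :
    ∃ t, γ * t ^ 2 + 2 * δ * t = c ∧ |t * γ| ≤ |δ| + √(δ ^ 2 + γ * c) := by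
  have discriminant := Real.sq_sqrt (by positivity : 0 ≤ δ ^ 2 + γ * c)
  rcases eq_or_ne γ 0 with rfl | hγ
  · refine ⟨c / (2 * δ), ?_, by rw [mul_zero, abs_zero]; positivity⟩
    have := h.resolve_left (by simp)
    field_simp
    ring
  · refine ⟨(-δ + √(δ ^ 2 + γ * c)) / γ, ?_, ?_⟩
    · field_simp
      linear_combination discriminant
    · rw [div_mul_cancel₀ _ hγ]
      exact (abs_add_le _ _).trans_eq (by rw [abs_neg, abs_of_nonneg (Real.sqrt_nonneg _)])

variable {T : Set SL2C}

theorem IsNormalForm.conj_uMat {p : SL2C} (hp : IsNormalForm p) {s t : ℝ}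
    (ht : (p 1 0).im * t ^ 2 + 2 * (p 0 0).im * t = (p 0 1).im - s) :
    (↑(uMat t * p * (uMat t)⁻¹) : Matrix (Fin 2) (Fin 2) ℂ) =
      !![p 0 0 + ↑(t * (p 1 0).im) * Complex.I, s * Complex.I;
        p 1 0, p 1 1 - ↑(t * (p 1 0).im) * Complex.I] := by
  obtain ⟨h11, h01, h10⟩ := hp
  have entry_01 : p 0 1 = (p 0 1).im * Complex.I := by simp [Complex.ext_iff, h01]
  have entry_10 : p 1 0 = (p 1 0).im * Complex.I := by simp [Complex.ext_iff, h10]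
  have entry_11 : p 1 1 = p 0 0 - 2 * (p 0 0).im * Complex.I := by
    have := Complex.sub_conj (p 0 0)
    push_cast at this
    linear_combination h11 - this
  replace ht := congrArg Complex.ofReal ht
  push_cast at ht
  ext i j
  fin_cases i <;> fin_cases j <;>
    simp only [Fin.zero_eta, Fin.mk_one, mul_apply, coe_inv, coe_uMat, of_apply, cons_val] <;>
    push_cast
  · linear_combination (t : ℂ) * entry_10
  · linear_combination -Complex.I * ht + entry_01 + t * entry_11 - t ^ 2 * entry_10
  · ring
  · linear_combination (-t : ℂ) * entry_10

/-- Conjugation by the solution `t` of the quadratic equation brings `p` to `vMat s` up to an error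
controlled by the lower left entry. -/
theorem vMat_mem_of_frequently (hT : IsClosed T)
    (hTU : ∀ p ∈ T, ∀ t : ℝ, uMat t * p * (uMat t)⁻¹ ∈ T) {s : ℝ}
    (h : ∃ᶠ p in 𝓝 (1 : SL2C), (p ∈ T ∧ IsNormalForm p ∧ ((p 1 0).im ≠ 0 ∨ (p 0 0).im ≠ 0)) ∧
      0 ≤ (p 1 0).im * ((p 0 1).im - s)) : vMat s ∈ T := by
  set l := 𝓝 (1 : SL2C) ⊓ 𝓟 {p | (p ∈ T ∧ IsNormalForm p ∧
    ((p 1 0).im ≠ 0 ∨ (p 0 0).im ≠ 0)) ∧ 0 ≤ (p 1 0).im * ((p 0 1).im - s)}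
  have : l.NeBot := frequently_mem_iff_neBot.mp h
  have mem_l : ∀ᶠ p in l, (p ∈ T ∧ IsNormalForm p ∧ ((p 1 0).im ≠ 0 ∨ (p 0 0).im ≠ 0)) ∧
      0 ≤ (p 1 0).im * ((p 0 1).im - s) := eventually_inf_principal.mpr (.of_forall fun _ => id)
  obtain ⟨t, ht⟩ := (mem_l.mono fun p hp => exists_quadratic_root hp.1.2.2 hp.2).choice
  have shift_tendsto : Tendsto (fun p => t p * (p 1 0).im) l (𝓝 0) := by
    refine squeeze_zero_norm' (ht.mono fun p hp => hp.2) (Tendsto.mono_left ?_ inf_le_left)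
    exact Continuous.tendsto' (by fun_prop) _ _ (by simp)
  have error_tendsto : Tendsto (fun p => (↑(t p * (p 1 0).im) * Complex.I : ℂ)) l (𝓝 0) := by
    simpa using ((Complex.continuous_ofReal.tendsto 0).comp shift_tendsto).mul_const Complex.I
  have entry_tendsto (i j : Fin 2) : Tendsto (fun p : SL2C => p i j) l (𝓝 ((1 : SL2C) i j)) :=
    ((continuous_apply i j).tendsto 1).mono_left inf_le_left
  have conj_tendsto : Tendsto (fun p => uMat (t p) * p * (uMat (t p))⁻¹) l (𝓝 (vMat s)) := by
    refine tendsto_iff_entries.mpr fun i j => Tendsto.congr' (EventuallyEq.symm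
      ((mem_l.and ht).mono fun p hp => congrFun₂ (hp.1.1.2.1.conj_uMat hp.2.1) i j)) ?_
    fin_cases i <;> fin_cases j
    · simpa [vMat] using (entry_tendsto 0 0).add error_tendsto
    · simp [vMat]
    · simpa [vMat] using entry_tendsto 1 0
    · simpa [vMat] using (entry_tendsto 1 1).sub error_tendsto
  exact hT.mem_of_tendsto conj_tendsto (mem_l.mono fun p hp => hTU p hp.1.1 (t p))

theorem forall_vMat_mem_of_frequently (hT : IsClosed T)
    (hTU : ∀ p ∈ T, ∀ t : ℝ, uMat t * p * (uMat t)⁻¹ ∈ T)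
    (h : ∃ᶠ p in 𝓝 (1 : SL2C), p ∈ T ∧ IsNormalForm p ∧ ((p 1 0).im ≠ 0 ∨ (p 0 0).im ≠ 0)) :
    (∀ s, 0 < s → vMat s ∈ T) ∨ ∀ s, s < 0 → vMat s ∈ T := by
  have tendsto_zero : Tendsto (fun p : SL2C => (p 0 1).im) (𝓝 1) (𝓝 0) :=
    Continuous.tendsto' (by fun_prop) _ _ (by simp)
  have split := h.mono fun p hp => (le_total (p 1 0).im 0).imp (And.intro hp) (And.intro hp)
  refine (frequently_or_distrib.mp split).imp (fun h s hs => ?_) fun h s hs => ?_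
  · refine vMat_mem_of_frequently hT hTU ?_
    refine (h.and_eventually (tendsto_zero.eventually_lt_const hs)).mono fun p hp => ?_
    exact ⟨hp.1.1, mul_nonneg_of_nonpos_of_nonpos hp.1.2 (sub_nonpos.mpr hp.2.le)⟩
  · refine vMat_mem_of_frequently hT hTU ?_
    refine (h.and_eventually (tendsto_zero.eventually_const_lt hs)).mono fun p hp => ?_
    exact ⟨hp.1.1, mul_nonneg hp.1.2 (sub_nonneg.mpr hp.2.le)⟩

theorem IsNormalForm.eq_vMat {p : SL2C} (hp : IsNormalForm p) (h00 : (p 0 0).im = 0)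
    (h10 : (p 1 0).im = 0) (hpos : 0 < (p 0 0).re) : p = vMat (p 0 1).im := by
  obtain ⟨h11, h01, h10'⟩ := hp
  have lower : p 1 0 = 0 := Complex.ext h10' h10
  have real : p 0 0 = (p 0 0).re := Complex.ext rfl (by simpa using h00)
  have square : ((p 0 0).re : ℂ) * (p 0 0).re = 1 := by
    simpa [h11, Complex.conj_eq_iff_real.mpr ⟨_, real⟩, lower, ← real] using det_eq_one p
  have one : (p 0 0).re = 1 := by
    have : (p 0 0).re * (p 0 0).re = 1 := by exact_mod_cast square
    nlinarith
  have imaginary : p 0 1 = (p 0 1).im * Complex.I := by simp [Complex.ext_iff, h01]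
  rw [vMat, ← imaginary]
  exact eq_uMat (by rw [real, one, Complex.ofReal_one]) lower

theorem forall_vMat_mem_or_eventually_eq (hT : IsClosed T)
    (hTU : ∀ p ∈ T, ∀ u ∈ U, u * p ∈ T) (hTH : ∀ p ∈ T, ∀ k ∈ realSL, p * k ∈ T) :
    ((∀ s, 0 < s → vMat s ∈ T) ∨ ∀ s, s < 0 → vMat s ∈ T) ∨
      ∀ᶠ g in 𝓝 (1 : SL2C), g ∈ T → ∃ s : ℝ, ∃ k ∈ realSL, g = vMat s * k := by
  have hTconj (p : SL2C) (hp : p ∈ T) (t : ℝ) : uMat t * p * (uMat t)⁻¹ ∈ T :=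
    hTH _ (hTU p hp _ (uMat_mem_U t)) _ (inv_mem (U_le_realSL (uMat_mem_U t)))
  by_cases h : ∃ᶠ p in 𝓝 (1 : SL2C), p ∈ T ∧ IsNormalForm p ∧ ((p 1 0).im ≠ 0 ∨ (p 0 0).im ≠ 0)
  · exact .inl (forall_vMat_mem_of_frequently hT hTconj h)
  obtain ⟨k, hk, hform⟩ := exists_tendsto_isNormalForm_mul
  have normalised_tendsto : Tendsto (fun g => g * k g) (𝓝 1) (𝓝 1) := by
    simpa using tendsto_id.mul hk
  have positive : ∀ᶠ p : SL2C in 𝓝 1, 0 < (p 0 0).re :=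
    (Continuous.tendsto' (by fun_prop) 1 1 (by simp)).eventually_const_lt one_pos
  right
  filter_upwards [hform, normalised_tendsto.eventually (not_frequently.mp h),
    normalised_tendsto.eventually positive] with g ⟨hkH, hnormal⟩ hdegenerate hpos hg
  obtain ⟨h10, h00⟩ : ((g * k g) 1 0).im = 0 ∧ ((g * k g) 0 0).im = 0 := by
    by_contra! hne
    exact hdegenerate ⟨hTH g hg _ hkH, hnormal, or_iff_not_imp_left.mpr (by simpa using hne)⟩
  exact ⟨_, (k g)⁻¹, inv_mem hkH, eq_mul_inv_of_mul_eq (hnormal.eq_vMat h00 h10 hpos)⟩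

end SL2C

/-! ### Half-lines of `V` and the dichotomy in `SL(2,ℂ)` -/

namespace SL2C

variable {Λ : Subgroup SL2C} {S X Y : Set SL2C}

theorem vMat_add (s t : ℝ) : vMat (s + t) = vMat s * vMat t := by
  rw [vMat, vMat, vMat, ← uMat_add]
  push_cast
  ring_nf

@[simp] theorem vMat_zero : vMat 0 = 1 := by simp [vMat]

@[fun_prop]
theorem continuous_vMat : Continuous vMat := by
  unfold vMat
  fun_prop

theorem mem_normalizer_U {g : SL2C} (h10 : g 1 0 = 0) (h00 : (g 0 0).im = 0) :
    g ∈ Subgroup.normalizer (U : Set SL2C) := by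
  have real : ((g 0 0).re : ℂ) = g 0 0 := Complex.ext rfl (by simp [h00])
  have conj_mem {c : SL2C} (hc : c 1 0 = 0) {r : ℝ} (hr : (r : ℂ) = c 0 0) {u : SL2C}
      (hu : u ∈ U) : c * u * c⁻¹ ∈ U := by
    obtain ⟨t, rfl⟩ := hu
    refine ⟨r ^ 2 * t, ?_⟩
    simp [mul_uMat hc, hr]
  refine Subgroup.mem_set_normalizer_iff.mpr fun u => ⟨conj_mem h10 real, fun hu => ?_⟩
  have inv_zero_zero : (((g 0 0).re⁻¹ : ℝ) : ℂ) = g⁻¹ 0 0 := by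
    rw [Complex.ofReal_inv, real, coe_inv]
    exact inv_eq_of_mul_eq_one_right (by simpa [h10] using det_eq_one g)
  simpa [mul_assoc] using conj_mem (by rw [coe_inv]; simp [h10]) inv_zero_zero hu

theorem eq_univ_of_eventually_vMat_mem (hΛ : IsCocompact Λ) (hd : IsDiscreteModCenter Λ)
    (hY : IsMinimalInvariant Λ U Y) (hX : IsClosedInvariant Λ realSL X) {l : Filter ℝ} [l.NeBot]
    (hl : ∀ r, Tendsto (· + r) l l) (h : ∀ᶠ s in l, vMat s ∈ Y⁻¹ * X) : X = Set.univ := by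
  obtain ⟨y, hy⟩ := hY.nonempty
  have mul_mem : ∀ᶠ s in l, y * vMat s ∈ X := h.mono fun s hs =>
    hY.mul_mem_of_mem_normalizer (hX.mono_right U_le_realSL) hs
      (mem_normalizer_U (by simp [vMat]) (by simp [vMat])) y hy
  obtain ⟨z, hz⟩ := hΛ.exists_forall_mul_mem_of_eventually hX (S := Set.range vMat) (l := l)
    (x := fun s => y * vMat s) (by
      rintro _ ⟨r, rfl⟩
      simpa [mul_assoc, vMat_add] using (hl r).eventually mul_mem)
  exact eq_univ_of_forall_mul_vMat_mem hΛ hd hX fun r => hz _ ⟨r, rfl⟩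

theorem frequently_mem_inv_mul_notMem_U (hΛ : IsCocompact Λ) (hd : IsDiscreteModCenter Λ)
    (hY : IsClosedInvariant Λ U Y) (hne : Y.Nonempty) :
    ∃ᶠ g in 𝓝 (1 : SL2C), g ∈ Y⁻¹ * Y ∧ g ∉ U := by
  obtain ⟨y, hy⟩ := hne
  have mul_uMat_mem (n : ℕ) : y * uMat n ∈ Y := by
    simpa using hY.mul_mem_right y hy _ (uMat_mem_U n)
  have small : ∀ᶠ g : SL2C in 𝓝 1, ‖g 0 1‖ < 1 :=
    (Continuous.tendsto' (by fun_prop) 1 0 (by simp)).eventually_lt_const one_pos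
  refine ((hΛ.frequently_inv_mul_mul fun n => y * uMat n).and_eventually small).mono ?_
  rintro _ ⟨⟨m, n, hmn, γ, hγ, rfl⟩, hsmall⟩
  refine ⟨mem_inv_mul_iff.mpr ⟨_, mul_uMat_mem m, ?_⟩, ?_⟩
  · simpa [mul_assoc] using hY.mul_mem_left γ hγ _ (mul_uMat_mem n)
  · rintro ⟨t, ht : uMat t = _⟩
    have γ_eq : y * uMat (m + t - n) * y⁻¹ = γ := by
      rw [sub_eq_add_neg, uMat_add, uMat_add, uMat_neg, ht]
      group
    have t_eq : (t : ℂ) = ((n - m : ℝ) : ℂ) := by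
      have := eq_zero_of_conj_uMat_mem hΛ hd (γ_eq ▸ hγ)
      push_cast
      linear_combination this
    have : (m : ℝ) + 1 ≤ n := by exact_mod_cast hmn
    rw [← ht, coe_uMat, t_eq] at hsmall
    simp only [of_apply, cons_val, Complex.norm_real, Real.norm_eq_abs, abs_lt] at hsmall
    linarith

theorem exists_mem_U_mul_mul_eq {k : SL2C} (hk : k ∈ realSL) (h10 : k 1 0 ≠ 0) (t : ℝ) :
    ∃ u ∈ U, ∃ u' ∈ U, u * k * u' = dMat t * lMat (Complex.exp t * k 1 0) := by
  have eq := uMat_mul_mul_uMat_eq h10 t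
  obtain ⟨r, rfl⟩ := hk
  refine ⟨_, ⟨(Real.exp t - r 0 0) / r 1 0, ?_⟩, _,
    ⟨-(Real.exp (-t) * (r 0 1 + (Real.exp t - r 0 0) / r 1 0 * r 1 1)), ?_⟩, eq⟩ <;>
    simp [SpecialLinearGroup.map_apply_coe]

theorem dMat_mem_of_frequently_vMat_mul (hS : IsClosed S)
    (hSU : ∀ u ∈ U, ∀ g ∈ S, ∀ u' ∈ U, u * g * u' ∈ S)
    (h : ∃ᶠ g in 𝓝 (1 : SL2C), (g ∈ S ∧ ∃ s : ℝ, ∃ k ∈ realSL, g = vMat s * k) ∧ g 1 0 ≠ 0)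
    (t : ℝ) : dMat t ∈ S := by
  have limit : Tendsto
      (fun g : SL2C => vMat ((g 0 1).im / (g 1 1).re) * (dMat t * lMat (Complex.exp t * g 1 0)))
      (𝓝 1) (𝓝 (dMat t)) := by
    have quotient : Tendsto (fun g : SL2C => (g 0 1).im / (g 1 1).re) (𝓝 1) (𝓝 (0 / 1)) :=
      Tendsto.div (Continuous.tendsto' (by fun_prop) _ _ (by simp))
        (Continuous.tendsto' (by fun_prop) _ _ (by simp)) one_ne_zero
    have lower : Tendsto (fun g : SL2C => dMat t * lMat (Complex.exp t * g 1 0)) (𝓝 1)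
        (𝓝 (dMat t)) := Continuous.tendsto' (by fun_prop) _ _ (by simp)
    simpa using ((continuous_vMat.tendsto _).comp quotient).mul lower
  have h11 : ∀ᶠ g : SL2C in 𝓝 1, (g 1 1).re ≠ 0 :=
    ContinuousAt.eventually_ne (Continuous.continuousAt (by fun_prop)) (by simp)
  refine hS.mem_of_frequently_of_tendsto ((h.and_eventually h11).mono ?_) limit
  rintro _ ⟨⟨⟨hg, s, k, hk, rfl⟩, hk10⟩, hk11⟩
  have same_row (j : Fin 2) : (vMat s * k) 1 j = k 1 j := by simp [vMat, mul_apply]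
  have s_eq : ((vMat s * k) 0 1).im / ((vMat s * k) 1 1).re = s := by
    rw [same_row] at hk11 ⊢
    rw [mul_apply, div_eq_iff hk11]
    simp [vMat, mem_realSL_iff.mp hk]
  rw [same_row] at hk10
  rw [s_eq, same_row]
  obtain ⟨u, hu, u', hu', heq⟩ := exists_mem_U_mul_mul_eq hk hk10 t
  have commute : vMat s * u = u * vMat s := by
    obtain ⟨r, rfl⟩ := hu
    rw [vMat, ← uMat_add, ← uMat_add, add_comm]
  rw [← heq, ← mul_assoc, ← mul_assoc, commute, mul_assoc u]
  exact hSU u hu _ hg u' hu'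

theorem dMat_notMem_U {t : ℝ} (ht : t ≠ 0) : dMat t ∉ U := by
  rintro ⟨r, hr⟩
  have : 1 = Real.exp t := by
    rw [← Complex.exp_ofReal_re]
    exact congrArg (fun g : SL2C => (g 0 0).re) hr
  exact ht ((Real.exp_eq_one_iff t).mp this.symm)

theorem frequently_apply_one_zero_eq_zero (hS : IsClosed S)
    (hSU : ∀ u ∈ U, ∀ g ∈ S, ∀ u' ∈ U, u * g * u' ∈ S)
    (h : ∃ᶠ g in 𝓝 (1 : SL2C), g ∈ S ∧ g ∉ U)
    (hSV : ∀ᶠ g in 𝓝 (1 : SL2C), g ∈ S → ∃ s : ℝ, ∃ k ∈ realSL, g = vMat s * k) :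
    ∃ᶠ g in 𝓝 (1 : SL2C), g ∈ S ∧ g ∉ U ∧ g 1 0 = 0 := by
  by_cases hne : ∃ᶠ g in 𝓝 (1 : SL2C), g ∈ S ∧ g 1 0 ≠ 0
  · have dMat_mem : ∀ t : ℝ, dMat t ∈ S := dMat_mem_of_frequently_vMat_mul hS hSU
      ((hne.and_eventually hSV).mono fun g hg => ⟨⟨hg.1.1, hg.2 hg.1.1⟩, hg.1.2⟩)
    have dMat_tendsto : Tendsto (fun t : ℝ => dMat t) (𝓝[≠] 0) (𝓝 1) :=
      (Continuous.tendsto' (by fun_prop) _ _ (by simp)).mono_left nhdsWithin_le_nhds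
    refine dMat_tendsto.frequently (Eventually.frequently ?_)
    exact eventually_nhdsWithin_of_forall fun t ht =>
      ⟨dMat_mem t, dMat_notMem_U ht, by simp⟩
  · refine (h.and_eventually (not_frequently.mp hne)).mono fun g hg => ⟨hg.1.1, hg.1.2, ?_⟩
    by_contra h10
    exact hg.2 ⟨hg.1.1, h10⟩

theorem vMat_mem_inv_mul_iff (hY : IsMinimalInvariant Λ U Y) (hX : IsClosedInvariant Λ realSL X)
    {s : ℝ} {k : SL2C} (hk : k ∈ realSL) (h10 : k 1 0 = 0) (hg : vMat s * k ∈ Y⁻¹ * Y) (r : ℝ) :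
    vMat r ∈ Y⁻¹ * X ↔ vMat ((k 0 0).re ^ 2 * r + s) ∈ Y⁻¹ * X := by
  have real : ((k 0 0).re : ℂ) = k 0 0 := Complex.ext rfl (by simp [mem_realSL_iff.mp hk])
  have normalizes : vMat s * k ∈ Subgroup.normalizer (U : Set SL2C) :=
    mem_normalizer_U (by simp [vMat, mul_apply, h10])
      (by simp [vMat, mul_apply, h10, mem_realSL_iff.mp hk])
  have mul_vMat : vMat s * k * vMat r = vMat ((k 0 0).re ^ 2 * r + s) * k := by
    rw [mul_assoc, vMat.eq_def r, mul_uMat h10, ← real, ← mul_assoc, add_comm, vMat_add]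
    simp [vMat, mul_assoc]
  have mul_right_mem {g h : SL2C} (hg : g ∈ Y⁻¹ * X) (hh : h ∈ realSL) : g * h ∈ Y⁻¹ * X := by
    simpa using hY.isClosedInvariant.mul_mem_inv_mul hX (one_mem U) hg hh
  rw [← hY.mul_mem_inv_mul_iff hg normalizes, mul_vMat]
  exact ⟨fun h => by simpa using mul_right_mem h (inv_mem hk), fun h => mul_right_mem h hk⟩

theorem frequently_affine_vMat_mem (hY : IsMinimalInvariant Λ U Y)
    (hX : IsClosedInvariant Λ realSL X)
    (h : ∃ᶠ g in 𝓝 (1 : SL2C), g ∈ Y⁻¹ * Y ∧ g ∉ U ∧ g 1 0 = 0)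
    (hV : ∀ᶠ g in 𝓝 (1 : SL2C), g ∈ Y⁻¹ * Y → ∃ s : ℝ, ∃ k ∈ realSL, g = vMat s * k) :
    ∃ᶠ p : ℝ × ℝ in 𝓝 (1, 0),
      p ≠ (1, 0) ∧ ∀ s, vMat s ∈ Y⁻¹ * X ↔ vMat (p.1 * s + p.2) ∈ Y⁻¹ * X := by
  have parameters_tendsto : Tendsto (fun g : SL2C => ((g 0 0).re ^ 2, (g 0 1).im * (g 0 0).re))
      (𝓝 1) (𝓝 (1, 0)) := Continuous.tendsto' (by fun_prop) _ _ (by simp)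
  have positive : ∀ᶠ g : SL2C in 𝓝 1, 0 < (g 0 0).re :=
    (Continuous.tendsto' (by fun_prop) 1 1 (by simp)).eventually_const_lt one_pos
  refine parameters_tendsto.frequently
    ((h.and_eventually (hV.and positive)).mono fun g ⟨⟨hg, hgU, h10⟩, hgV, hpos⟩ => ?_)
  obtain ⟨s, k, hk, rfl⟩ := hgV hg
  have hk10 : k 1 0 = 0 := by simpa [vMat, mul_apply] using h10
  have h00 : (vMat s * k) 0 0 = k 0 0 := by simp [vMat, mul_apply, hk10]
  have s_eq : ((vMat s * k) 0 1).im * (k 0 0).re = s := by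
    have det : (k 0 0).re * (k 1 1).re = 1 := by
      simpa [hk10, mem_realSL_iff.mp hk] using congrArg Complex.re (det_eq_one k)
    have im_eq : ((vMat s * k) 0 1).im = s * (k 1 1).re := by
      simp [vMat, mul_apply, mem_realSL_iff.mp hk]
    rw [im_eq]
    linear_combination s * det
  refine ⟨fun heq => hgU ?_, by simpa only [h00, s_eq] using vMat_mem_inv_mul_iff hY hX hk hk10 hg⟩
  obtain ⟨hre, him⟩ := Prod.mk.inj heq
  have one : (k 0 0).re = 1 := by
    rw [h00] at hre hpos
    nlinarith
  rw [eq_uMat (h00.trans (Complex.ext one (mem_realSL_iff.mp hk 0 0))) h10]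
  refine ⟨((vMat s * k) 0 1).re, congrArg uMat (Complex.ext rfl ?_)⟩
  simpa [h00, one] using him.symm

theorem eq_univ_of_frequently_notMem_realSL (hΛ : IsCocompact Λ) (hd : IsDiscreteModCenter Λ)
    (hX : IsClosedInvariant Λ realSL X) (hY : IsMinimalInvariant Λ U Y) (hYX : Y ⊆ X)
    (h : ∃ᶠ g in 𝓝 (1 : SL2C), g ∈ Y⁻¹ * X ∧ g ∉ realSL) : X = Set.univ := by
  have hYU := hY.isClosedInvariant
  have hT : IsClosed (Y⁻¹ * X) := hYU.isClosed_inv_mul hΛ hX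
  have of_half_line (hE : (∀ᶠ s in atTop, vMat s ∈ Y⁻¹ * X) ∨ ∀ᶠ s in atBot, vMat s ∈ Y⁻¹ * X) :
      X = Set.univ := hE.elim
    (eq_univ_of_eventually_vMat_mem hΛ hd hY hX fun r =>
      tendsto_atTop_add_const_right _ r tendsto_id)
    (eq_univ_of_eventually_vMat_mem hΛ hd hY hX fun r =>
      tendsto_atBot_add_const_right _ r tendsto_id)
  rcases forall_vMat_mem_or_eventually_eq hT
    (fun p hp u hu => by simpa using hYU.mul_mem_inv_mul hX hu hp (one_mem _))
    (fun p hp k hk => by simpa using hYU.mul_mem_inv_mul hX (one_mem _) hp hk) with hhalf | hTV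
  · exact of_half_line (hhalf.imp (fun h => (eventually_gt_atTop 0).mono h)
      fun h => (eventually_lt_atBot 0).mono h)
  have hYV := hTV.mono fun g hg (hgY : g ∈ Y⁻¹ * Y) => hg (Set.mul_subset_mul_left hYX hgY)
  have zero_mem : vMat 0 ∈ Y⁻¹ * X := by
    obtain ⟨y, hy⟩ := hY.nonempty
    exact mem_inv_mul_iff.mpr ⟨y, hy, by simpa using hYX hy⟩
  obtain ⟨s, hs, hs0⟩ : ∃ s, vMat s ∈ Y⁻¹ * X ∧ 0 ≠ s := by
    obtain ⟨g, ⟨hg, hgH⟩, hgV⟩ := (h.and_eventually hTV).exists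
    obtain ⟨s, k, hk, rfl⟩ := hgV hg
    refine ⟨s, by simpa using hYU.mul_mem_inv_mul hX (one_mem _) hg (inv_mem hk), ?_⟩
    rintro rfl
    exact hgH (by simpa using hk)
  have triangular := frequently_apply_one_zero_eq_zero (hYU.isClosed_inv_mul hΛ hYU)
    (fun u hu g hg u' hu' => hYU.mul_mem_inv_mul hYU hu hg hu')
    (frequently_mem_inv_mul_notMem_U hΛ hd hYU hY.nonempty) hYV
  exact of_half_line (eventually_mem_of_frequently_affine (hT.preimage continuous_vMat) zero_mem hs
    hs0 (frequently_affine_vMat_mem hY hX triangular hYV))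

theorem isClosed_or_dense_doubleCoset (hΛ : IsCocompact Λ) (hd : IsDiscreteModCenter Λ) (a : SL2C) :
    IsClosed (DoubleCoset.doubleCoset a (Λ : Set SL2C) realSL) ∨
      Dense (DoubleCoset.doubleCoset a (Λ : Set SL2C) realSL) := by
  refine or_iff_not_imp_left.mpr fun ha => dense_iff_closure_eq.mpr ?_
  obtain ⟨Y, hYX, hY, h⟩ := exists_isMinimalInvariant_frequently_notMem hΛ U_le_realSL ha
  exact eq_univ_of_frequently_notMem_realSL hΛ hd (isClosedInvariant_closure_doubleCoset a) hY hYX h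

end SL2C

/-! ### Passage to `PSL(2,ℂ)` -/

namespace SL2C

theorem isOpenQuotientMap_mkX_pr : IsOpenQuotientMap fun g => mkX Γ (pr g) :=
  (MulAction.isOpenQuotientMap_quotientMk (Γ := Γ) (T := PSL2C)).comp
    QuotientGroup.isOpenQuotientMap_mk

theorem mkX_pr_eq_iff {g k : SL2C} :
    mkX Γ (pr g) = mkX Γ (pr k) ↔ ∃ γ ∈ Γ.comap pr, γ * g = k := by
  rw [mkX, mkX, Quotient.eq'', QuotientGroup.rightRel_apply, ← map_inv, ← map_mul]
  constructor
  · exact fun h => ⟨k * g⁻¹, h, inv_mul_cancel_right k g⟩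
  · rintro ⟨γ, hγ, rfl⟩
    simpa using hγ

theorem isCocompact_comap_pr [CompactSpace (XΓ Γ)] : IsCocompact (Γ.comap pr) :=
  isCocompact_of_isOpenQuotientMap (isOpenQuotientMap_mkX_pr Γ) fun _ _ => (mkX_pr_eq_iff Γ).mp

theorem isDiscreteModCenter_comap_pr [DiscreteTopology Γ] : IsDiscreteModCenter (Γ.comap pr) := by
  have isolated : ∀ᶠ x in 𝓝 (1 : PSL2C), x ∈ Γ → x = 1 := by
    refine eventually_nhdsWithin_iff.mp
      ((eventually_nhds_subtype_iff (Γ : Set PSL2C) 1 (· = 1)).mp ?_)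
    simp [nhds_discrete]
  have := (QuotientGroup.continuous_mk.tendsto' (1 : SL2C) (1 : PSL2C) rfl).eventually isolated
  exact this.mono fun g hg hgΓ => (QuotientGroup.eq_one_iff g).mp (hg hgΓ)

theorem preimage_orb_Hset (g : SL2C) :
    (fun k => mkX Γ (pr k)) ⁻¹' orb Γ (mkX Γ (pr g)) Hset =
      DoubleCoset.doubleCoset g (Γ.comap pr : Set SL2C) realSL := by
  have act_pr (h : SL2C) : act Γ (mkX Γ (pr g)) (pr h) = mkX Γ (pr (g * h)) := by
    rw [map_mul]
    rfl
  ext k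
  simp only [DoubleCoset.mem_doubleCoset, SetLike.mem_coe]
  constructor
  · rintro ⟨_, ⟨r, rfl⟩, hr⟩
    obtain ⟨γ, hγ, rfl⟩ := (mkX_pr_eq_iff Γ).mp ((act_pr _).symm.trans hr)
    exact ⟨γ, hγ, _, ⟨r, rfl⟩, (mul_assoc _ _ _).symm⟩
  · rintro ⟨γ, hγ, _, ⟨r, rfl⟩, rfl⟩
    exact ⟨_, ⟨r, rfl⟩, (act_pr _).trans ((mkX_pr_eq_iff Γ).mpr ⟨γ, hγ, (mul_assoc _ _ _).symm⟩)⟩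

end SL2C

/-- If `Γ ≤ PSL(2,ℂ)` is a discrete subgroup with `Γ\G` compact (a uniform
lattice), then every orbit `xH` of `H = π(SL(2,ℝ))` is closed or dense in `Γ\G`. -/
theorem closed_or_dense_H_orbit_uniform_lattice
    (Γ : Subgroup PSL2C) (hdisc : DiscreteTopology Γ) (hcpt : CompactSpace (XΓ Γ))
    (x : XΓ Γ) :
    IsClosed (orb Γ x Hset) ∨ Dense (orb Γ x Hset) := by
  have hq := SL2C.isOpenQuotientMap_mkX_pr Γ
  obtain ⟨g, rfl⟩ := hq.surjective x
  rw [← hq.isQuotientMap.isClosed_preimage, ← hq.dense_preimage_iff, SL2C.preimage_orb_Hset]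
  exact SL2C.isClosed_or_dense_doubleCoset (SL2C.isCocompact_comap_pr Γ)
    (SL2C.isDiscreteModCenter_comap_pr Γ) g

end
end
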